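/- arXiv:1606.05306 — 3 statements merged into one kernel-verified Lean document; each statement's English description precedes it below -/
import Mathlib

section
/- Let s be an even integer with s ≥ 6 and let N ≥ 2s. Then for every t ∈ [−π,π] \ {0} and every l ∈ {0,1,2,3}, the l-th derivative of σ̃_N satisfies |σ̃_N^{(l)}(t)| ≤ c_{l,s}/((N+1)^{s−l}·|t|^s), where c_{0,s} = 1.02·(s−1)!·2^s·s, c_{1,s} = 1.02·(s−1)!·2^s·2s, c_{2,s} = 1.02·(s−1)!·2^s·(4s+1), and c_{3,s} = 1.02·(s−1)!·2^s·(9s−2). -/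
noncomputable section

/-- iterated integrals of the sign of the Chebyshev polynomial: the perfect B-spline chain -/
def fspline (s : ℕ) : ℕ → ℝ → ℝ
  | 0 => fun x => (-1 : ℝ) ^ (s - 1) * Real.sign ((Polynomial.Chebyshev.U ℝ ((s : ℤ) - 1)).eval x)
  | (k + 1) => fun x => ∫ t in (-1 : ℝ)..x, fspline s k t

/-- the scaled perfect B-spline g̃_{s-1} -/
def gtilde (s : ℕ) (x : ℝ) : ℝ := fspline s (s - 1) (2 * x)

/-- discrete norm ‖g̃‖_{1,N} -/
def gnorm (s N : ℕ) : ℝ :=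
  ∑ k ∈ Finset.Icc (-(N : ℤ)) (N : ℤ), gtilde s ((k : ℝ) / (2 * ((N : ℝ) + 1)))

/-- the trigonometric kernel σ̃_N (real-valued) -/
def sigmaT (s N : ℕ) (t : ℝ) : ℝ :=
  ((1 / (gnorm s N : ℂ)) *
      ∑ k ∈ Finset.Icc (-(N : ℤ)) (N : ℤ),
        (gtilde s ((k : ℝ) / (2 * ((N : ℝ) + 1))) : ℂ) * Complex.exp ((k : ℂ) * t * Complex.I)).re

/-- constants c_{l,s} -/
def cConst : ℕ → ℕ → ℝ
  | 0, s => 1.02 * (Nat.factorial (s - 1)) * 2 ^ s * s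
  | 1, s => 1.02 * (Nat.factorial (s - 1)) * 2 ^ s * (2 * s)
  | 2, s => 1.02 * (Nat.factorial (s - 1)) * 2 ^ s * (4 * s + 1)
  | _, s => 1.02 * (Nat.factorial (s - 1)) * 2 ^ s * (9 * s - 2)

end

section

open scoped Real
open MeasureTheory intervalIntegral Set


noncomputable def nd (s : ℕ) (j : ℕ) : ℝ := -Real.cos (j * π / s)

lemma nd_zero (s : ℕ) : nd s 0 = -1 := by simp [nd]
lemma nd_last (s : ℕ) (hs : 6 ≤ s) : nd s s = 1 := by
  have : (s:ℝ) ≠ 0 := by positivity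
  simp [nd, this]

lemma ang_mem (s j : ℕ) (hs : 6 ≤ s) (hj : j ≤ s) : (j * π / s : ℝ) ∈ Icc 0 π := by
  have h0 : (0:ℝ) < s := by positivity
  have h1 : (j:ℝ) ≤ s := by exact_mod_cast hj
  constructor
  · positivity
  · rw [div_le_iff₀ h0]; nlinarith [Real.pi_pos]

lemma nd_lt (s j : ℕ) (hs : 6 ≤ s) (hj : j < s) : nd s j < nd s (j+1) := by
  unfold nd
  have := Real.strictAntiOn_cos (ang_mem s j hs hj.le) (ang_mem s (j+1) hs hj)
    (by push_cast; gcongr; linarith)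
  linarith

lemma nd_mem (s j : ℕ) : nd s j ∈ Icc (-1:ℝ) 1 := by
  unfold nd
  constructor
  · linarith [Real.cos_le_one (j * π / s)]
  · linarith [Real.neg_one_le_cos (j * π / s)]

lemma f0_val (s i : ℕ) (hs : 6 ≤ s) (he : Even s) (hi : i < s) (x : ℝ)
    (hx : x ∈ Ioo (nd s i) (nd s (i+1))) : fspline s 0 x = (-1)^i := by
  have h0 : (0:ℝ) < s := by positivity
  have hx1 : -1 ≤ x := (nd_mem s i).1.trans hx.1.le
  have hx2 : x ≤ 1 := hx.2.le.trans (nd_mem s (i+1)).2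
  obtain ⟨θ, hθ, hxθ⟩ : ∃ θ, θ ∈ Icc 0 π ∧ x = -Real.cos θ := by
    refine ⟨Real.arccos (-x), ⟨Real.arccos_nonneg _, Real.arccos_le_pi _⟩, ?_⟩
    rw [Real.cos_arccos (by linarith) (by linarith)]; ring
  subst hxθ
  have a1 : (i * π / s : ℝ) < θ := by
    by_contra h
    push Not at h
    have := Real.antitoneOn_cos hθ (ang_mem s i hs hi.le) h
    have := hx.1
    unfold nd at this; linarith
  have a2 : θ < ((i+1 : ℕ) * π / s : ℝ) := by
    by_contra h
    push Not at h
    have := Real.antitoneOn_cos (ang_mem s (i+1) hs hi) hθ h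
    have := hx.2
    unfold nd at this; linarith
  have b1 := (ang_mem s i hs hi.le).1
  have b2 := (ang_mem s (i+1) hs hi).2
  rw [div_lt_iff₀ h0] at a1
  rw [lt_div_iff₀ h0] at a2
  push_cast at a2
  have hsin : 0 < Real.sin θ := Real.sin_pos_of_pos_of_lt_pi (by nlinarith [Real.pi_pos]) (by
    have : θ < ((i+1 : ℕ) * π / s : ℝ) := by rw [lt_div_iff₀ h0]; push_cast; exact a2
    linarith)
  have hU := Polynomial.Chebyshev.U_real_cos (π - θ) ((s:ℤ)-1)
  rw [Real.cos_pi_sub, Real.sin_pi_sub] at hU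
  have e1 : Real.sin (((((s:ℤ)-1 : ℤ):ℝ) + 1) * (π - θ)) = - Real.sin (s * θ) := by
    push_cast
    obtain ⟨r, hr⟩ := he
    have : ((s:ℝ) - 1 + 1) * (π - θ) = (r:ℝ) * (2 * π) - s * θ := by
      rw [hr]; push_cast; ring
    rw [this, Real.sin_nat_mul_two_pi_sub]
  rw [e1] at hU
  have e2 : Real.sin (s * θ) = (-1)^i * Real.sin (s * θ - i * π) := by
    rw [Real.sin_sub_nat_mul_pi, ← mul_assoc, ← mul_pow]; simp
  have e3 : 0 < Real.sin (s * θ - i * π) :=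
    Real.sin_pos_of_pos_of_lt_pi (by linarith) (by linarith)
  have hodd : (-1 : ℝ) ^ (s-1) = -1 := by
    have : Odd (s-1) := by
      obtain ⟨r, hr⟩ := he
      exact ⟨r-1, by omega⟩
    exact this.neg_one_pow
  simp only [fspline, hodd]
  rcases neg_one_pow_eq_or ℝ i with h | h <;> rw [h] at e2 ⊢
  · rw [Real.sign_of_neg]; · norm_num
    by_contra hc
    push Not at hc
    nlinarith
  · rw [Real.sign_of_pos]; · norm_num
    by_contra hc
    push Not at hc
    nlinarith

lemma sign_meas : Measurable Real.sign := by
  unfold Real.sign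
  exact Measurable.ite measurableSet_Iio measurable_const
    (Measurable.ite measurableSet_Ioi measurable_const measurable_const)

lemma f0_meas (s : ℕ) : Measurable (fspline s 0) := by
  unfold fspline
  exact (sign_meas.comp (Polynomial.continuous _).measurable).const_mul _

lemma f0_le (s : ℕ) (x : ℝ) : |fspline s 0 x| ≤ 1 := by
  simp only [fspline, abs_mul, abs_pow, abs_neg, abs_one, one_pow, one_mul]
  rcases Real.sign_apply_eq ((Polynomial.Chebyshev.U ℝ ((s : ℤ) - 1)).eval x) with h | h | h <;>
    simp [h]

lemma f0_int (s : ℕ) (a b : ℝ) : IntervalIntegrable (fspline s 0) volume a b := by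
  have : IntervalIntegrable (fun _ : ℝ => (1:ℝ)) volume a b := intervalIntegrable_const
  refine this.mono_fun (f0_meas s).aestronglyMeasurable ?_
  filter_upwards with x
  simpa using f0_le s x

lemma fs_succ (s k : ℕ) (x : ℝ) : fspline s (k+1) x = ∫ t in (-1:ℝ)..x, fspline s k t := by
  rw [fspline]

lemma fs_intcont (s k : ℕ) : (∀ a b, IntervalIntegrable (fspline s k) volume a b) ∧
    Continuous (fspline s (k+1)) := by
  induction k with
  | zero =>
    refine ⟨f0_int s, ?_⟩
    have := continuous_primitive (f0_int s) (-1)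
    exact this
  | succ k ih =>
    have h : ∀ a b, IntervalIntegrable (fspline s (k+1)) volume a b :=
      fun a b => ih.2.intervalIntegrable a b
    exact ⟨h, continuous_primitive h (-1)⟩

lemma fs_int (s k : ℕ) (a b : ℝ) : IntervalIntegrable (fspline s k) volume a b :=
  (fs_intcont s k).1 a b
lemma fs_intC (s k : ℕ) (a b : ℝ) :
    IntervalIntegrable (fun x => (fspline s k x : ℂ)) volume a b :=
  ⟨(fs_int s k a b).1.ofReal, (fs_int s k a b).2.ofReal⟩
lemma fs_cont (s k : ℕ) : Continuous (fspline s (k+1)) := (fs_intcont s k).2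

lemma fs_neg_one (s k : ℕ) : fspline s (k+1) (-1) = 0 := by simp [fs_succ]

def excS (s : ℕ) : Set ℝ := {x | (Polynomial.Chebyshev.U ℝ ((s : ℤ) - 1)).eval x = 0}

lemma excS_count (s : ℕ) (hs : 6 ≤ s) : (excS s).Countable := by
  have hU : Polynomial.Chebyshev.U ℝ ((s : ℤ) - 1) ≠ 0 := by
    intro h
    have := Polynomial.Chebyshev.U_eval_one (R := ℝ) ((s:ℤ)-1)
    rw [h] at this
    simp at this
    have h6 : (6:ℝ) ≤ s := by exact_mod_cast hs
    linarith
  have := Polynomial.finite_setOfPred_isRoot hU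
  exact this.countable

lemma fs_contAt (s k : ℕ) (x : ℝ) (hx : x ∉ excS s) : ContinuousAt (fspline s k) x := by
  cases k with
  | succ k => exact (fs_cont s k).continuousAt
  | zero =>
    have hc : ContinuousAt (fun x => (Polynomial.Chebyshev.U ℝ ((s : ℤ) - 1)).eval x) x :=
      (Polynomial.continuous _).continuousAt
    have hx' : (Polynomial.Chebyshev.U ℝ ((s : ℤ) - 1)).eval x ≠ 0 := hx
    rcases lt_or_gt_of_ne hx' with h | h
    · have : fspline s 0 =ᶠ[nhds x] fun _ => (-1)^(s-1) * (-1) := by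
        filter_upwards [hc.eventually_lt continuousAt_const h] with y hy
        simp only [fspline, Real.sign_of_neg hy]
      exact continuousAt_const.congr this.symm
    · have : fspline s 0 =ᶠ[nhds x] fun _ => (-1)^(s-1) * 1 := by
        filter_upwards [continuousAt_const.eventually_lt hc h] with y hy
        simp only [fspline, Real.sign_of_pos hy]
      exact continuousAt_const.congr this.symm

lemma fs_meas (s k : ℕ) : StronglyMeasurable (fspline s k) := by
  cases k with
  | succ k => exact (fs_cont s k).stronglyMeasurable
  | zero => exact (f0_meas s).stronglyMeasurable

lemma fs_deriv (s k : ℕ) (x : ℝ) (hx : x ∉ excS s) :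
    HasDerivAt (fspline s (k+1)) (fspline s k x) x := by
  have := integral_hasDerivAt_right (fs_int s k (-1) x)
    (fs_meas s k).stronglyMeasurableAtFilter (fs_contAt s k x hx)
  exact this

/-- integration by parts -/
lemma fs_parts (s k : ℕ) (hs : 6 ≤ s) (φ φ' : ℝ → ℂ) (hφ : ∀ x, HasDerivAt φ (φ' x) x)
    (hφ' : Continuous φ') (b : ℝ) :
    ∫ x in (-1:ℝ)..b, (fspline s (k+1) x : ℂ) * φ' x =
      fspline s (k+1) b * φ b - ∫ x in (-1:ℝ)..b, (fspline s k x : ℂ) * φ x := by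
  have hφc : Continuous φ := continuous_iff_continuousAt.2 fun x => (hφ x).continuousAt
  have i1 : IntervalIntegrable (fun x => (fspline s k x : ℂ) * φ x) volume (-1) b :=
    (fs_intC s k (-1) b).mul_continuousOn hφc.continuousOn
  have i2 : IntervalIntegrable (fun x => (fspline s (k+1) x : ℂ) * φ' x) volume (-1) b :=
    (fs_intC s (k+1) (-1) b).mul_continuousOn hφ'.continuousOn
  have := MeasureTheory.integral_eq_of_hasDerivAt_off_countable
    (fun x => (fspline s (k+1) x : ℂ) * φ x) 
    (fun x => (fspline s k x : ℂ) * φ x + (fspline s (k+1) x : ℂ) * φ' x)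
    (excS_count s hs) (a := -1) (b := b)
    ((Complex.continuous_ofReal.comp (fs_cont s k)).mul hφc).continuousOn
    (fun x hx => (fs_deriv s k x hx.2).ofReal_comp.mul (hφ x)) (i1.add i2)
  rw [integral_add i1 i2, fs_neg_one] at this
  simp at this
  rw [← this]; ring



section
variable {E : Type*} [NormedAddCommGroup E] [NormedSpace ℝ E] [CompleteSpace E]

lemma seg (s i : ℕ) (hs : 6 ≤ s) (he : Even s) (hi : i < s) (φ φ' : ℝ → E)
    (hφ : ∀ x, HasDerivAt φ (φ' x) x) (hφ' : Continuous φ') (a b : ℝ)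
    (ha : nd s i ≤ a) (hab : a ≤ b) (hb : b ≤ nd s (i+1)) :
    ∫ x in a..b, fspline s 0 x • φ' x = (-1:ℝ)^i • (φ b - φ a) := by
  rw [← integral_eq_sub_of_hasDerivAt (fun x _ => hφ x) (hφ'.intervalIntegrable a b),
    ← intervalIntegral.integral_smul]
  rw [integral_of_le hab, integral_of_le hab, integral_Ioc_eq_integral_Ioo,
    integral_Ioc_eq_integral_Ioo]
  apply setIntegral_congr_fun measurableSet_Ioo
  intro x hx
  simp only
  rw [f0_val s i hs he hi x ⟨ha.trans_lt hx.1, hx.2.trans_le hb⟩]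

lemma f0_smul_int (s : ℕ) (φ : ℝ → E) (hφ : Continuous φ) (a b : ℝ) :
    IntervalIntegrable (fun x => fspline s 0 x • φ x) volume a b :=
  (f0_int s a b).smul_continuousOn hφ.continuousOn

lemma seg_sum (s j : ℕ) (hs : 6 ≤ s) (he : Even s) (hj : j ≤ s) (φ φ' : ℝ → E)
    (hφ : ∀ x, HasDerivAt φ (φ' x) x) (hφ' : Continuous φ') :
    ∫ x in (-1:ℝ)..(nd s j), fspline s 0 x • φ' x =
      ∑ i ∈ Finset.range j, (-1:ℝ)^i • (φ (nd s (i+1)) - φ (nd s i)) := by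
  induction j with
  | zero => simp [nd_zero]
  | succ j ih =>
    rw [Finset.sum_range_succ, ← ih (by omega),
      ← seg s j hs he (by omega) φ φ' hφ hφ' _ _ le_rfl (nd_lt s j hs (by omega)).le le_rfl,
      integral_add_adjacent_intervals] <;> exact f0_smul_int s φ' hφ' _ _
end

lemma tele (α : ℝ) (h : Real.cos (α/2) ≠ 0) (j : ℕ) :
    ∑ i ∈ Finset.range j, (-1:ℝ)^i * (Real.cos (i * α) - Real.cos ((i+1) * α)) =
      - (Real.tan (α/2) * ((-1)^j * Real.sin (j * α))) := by
  induction j with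
  | zero => simp
  | succ j ih =>
    rw [Finset.sum_range_succ, ih]
    have key : Real.cos (j * α) - Real.cos ((j+1) * α) =
        Real.tan (α/2) * (Real.sin (j * α) + Real.sin ((j+1) * α)) := by
      rw [Real.tan_eq_sin_div_cos, Real.cos_sub_cos, Real.sin_add_sin]
      field_simp
      rw [show α * ((j:ℝ) - (j+1)) / 2 = -(α/2) by ring, Real.sin_neg, Real.cos_neg]
      ring
    rw [key]
    push_cast
    rw [pow_succ]
    ring

noncomputable def dl (s : ℕ) : ℝ := π / s / 2

lemma dl_pos (s : ℕ) (hs : 6 ≤ s) : 0 < dl s := by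
  unfold dl
  have := Real.pi_pos
  positivity

lemma dl_le (s : ℕ) (hs : 6 ≤ s) : dl s ≤ π / 12 := by
  unfold dl
  have : (6:ℝ) ≤ s := by exact_mod_cast hs
  rw [div_div, div_le_div_iff₀ (by positivity) (by positivity)]
  nlinarith [Real.pi_pos]

lemma f1_nd (s j : ℕ) (hs : 6 ≤ s) (he : Even s) (hj : j ≤ s) :
    fspline s 1 (nd s j) = -(Real.tan (dl s) * ((-1)^j * Real.sin (j * (π/s)))) := by
  have h := seg_sum s j hs he hj (fun x : ℝ => x) (fun _ => (1:ℝ)) (fun x => hasDerivAt_id x)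
    continuous_const
  have hd := dl_pos s hs
  have hd' := dl_le s hs
  rw [dl, ← tele (π/s) (by
    have := Real.cos_pos_of_mem_Ioo (x := dl s) ⟨by linarith [Real.pi_pos], by linarith [Real.pi_pos]⟩
    exact this.ne')]
  simp only [smul_eq_mul, mul_one] at h
  rw [fs_succ, h]
  apply Finset.sum_congr rfl
  intro i _
  unfold nd
  push_cast
  simp only [mul_div_assoc]
  ring

lemma f1_seg (s i : ℕ) (hs : 6 ≤ s) (he : Even s) (hi : i < s) (x : ℝ)
    (hx : x ∈ Icc (nd s i) (nd s (i+1))) :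
    fspline s 1 x = fspline s 1 (nd s i) + (-1)^i * (x - nd s i) := by
  have h := seg s i hs he hi (fun x : ℝ => x) (fun _ => (1:ℝ)) (fun x => hasDerivAt_id x)
    continuous_const _ _ le_rfl hx.1 hx.2
  simp only [smul_eq_mul, mul_one] at h
  rw [← h, fs_succ, fs_succ, integral_add_adjacent_intervals] <;> exact f0_int s _ _

lemma cover (s : ℕ) (hs : 6 ≤ s) (x : ℝ) (hx : x ∈ Icc (-1:ℝ) 1) :
    ∃ i < s, x ∈ Icc (nd s i) (nd s (i+1)) := by
  have : ∀ j, x ≤ nd s (j+1) → ∃ i < j+1, x ∈ Icc (nd s i) (nd s (i+1)) := by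
    intro j
    induction j with
    | zero => exact fun h => ⟨0, by simp, by rw [nd_zero]; exact hx.1, h⟩
    | succ j ih =>
      intro h
      by_cases h' : x ≤ nd s (j+1)
      · obtain ⟨i, hi, h2⟩ := ih h'
        exact ⟨i, by omega, h2⟩
      · exact ⟨j+1, by omega, by push Not at h'; exact h'.le, h⟩
  obtain ⟨i, hi, h2⟩ := this (s-1) (by
    rw [show s - 1 + 1 = s by omega, nd_last s hs]; exact hx.2)
  exact ⟨i, by omega, h2⟩

lemma tan_nonneg' (s : ℕ) (hs : 6 ≤ s) : 0 ≤ Real.tan (dl s) :=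
  Real.tan_nonneg_of_nonneg_of_le_pi_div_two (dl_pos s hs).le
    ((dl_le s hs).trans (by linarith [Real.pi_pos]))

lemma abs_sgn (j : ℕ) (a : ℝ) : |(-1)^j * a| = |a| := by
  rw [abs_mul]; simp

lemma f1_nd_le (s j : ℕ) (hs : 6 ≤ s) (he : Even s) (hj : j ≤ s) :
    |fspline s 1 (nd s j)| ≤ Real.tan (dl s) := by
  rw [f1_nd s j hs he hj, abs_neg, abs_mul, abs_sgn, abs_of_nonneg (tan_nonneg' s hs)]
  have := Real.abs_sin_le_one (j * (π/s))
  nlinarith [tan_nonneg' s hs]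

lemma f1_le (s : ℕ) (hs : 6 ≤ s) (he : Even s) (x : ℝ) (hx : x ∈ Icc (-1:ℝ) 1) :
    |fspline s 1 x| ≤ Real.tan (dl s) := by
  obtain ⟨i, hi, h⟩ := cover s hs x hx
  have a1 := abs_le.1 (f1_nd_le s i hs he hi.le)
  have a2 := abs_le.1 (f1_nd_le s (i+1) hs he hi)
  rw [f1_seg s i hs he hi _ ⟨(nd_lt s i hs hi).le, le_rfl⟩] at a2
  rw [f1_seg s i hs he hi x h]
  have h1 := h.1
  have h2 := h.2
  rcases neg_one_pow_eq_or ℝ i with e | e <;> rw [e] at a2 ⊢ <;> rw [abs_le] <;> constructor <;>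
    linarith

lemma f2_seg (s i : ℕ) (hs : 6 ≤ s) (he : Even s) (hi : i < s) (x : ℝ)
    (hx : x ∈ Icc (nd s i) (nd s (i+1))) :
    fspline s 2 x = fspline s 2 (nd s i) +
      (-1)^i * ((fspline s 1 x)^2 - (fspline s 1 (nd s i))^2) / 2 := by
  have h : ∫ y in (nd s i)..x, fspline s 1 y =
      (-1)^i * ((fspline s 1 x)^2 - (fspline s 1 (nd s i))^2) / 2 := by
    have e : ∫ y in (nd s i)..x, fspline s 1 y =
        ∫ y in (nd s i)..x, (fspline s 1 (nd s i) + (-1)^i * (y - nd s i)) := by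
      apply integral_congr
      intro y hy
      rw [uIcc_of_le hx.1] at hy
      exact f1_seg s i hs he hi y ⟨hy.1, hy.2.trans hx.2⟩
    rw [e, f1_seg s i hs he hi x hx]
    set c := fspline s 1 (nd s i)
    set a := nd s i
    have hd : ∀ y, HasDerivAt (fun y : ℝ => c * (y - a) + (-1:ℝ)^i * (y-a)^2/2)
        (c + (-1)^i * (y - a)) y := by
      intro y
      have h1 : HasDerivAt (fun y : ℝ => y - a) 1 y := (hasDerivAt_id y).sub_const a
      exact ((h1.const_mul c).add (((h1.pow 2).const_mul ((-1:ℝ)^i)).div_const 2)).congr_deriv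
        (by push_cast; ring)
    rw [integral_eq_sub_of_hasDerivAt (fun y _ => hd y)
      (Continuous.intervalIntegrable (by fun_prop) _ _)]
    have : ((-1:ℝ)^i)^2 = 1 := by rw [← pow_mul, mul_comm, pow_mul]; simp
    have h3 : ((-1:ℝ)^i)^3 = (-1)^i := by rw [pow_succ, this, one_mul]
    ring_nf
    have h4 : ((-1:ℝ)^(i*2)) = 1 := by rw [pow_mul]; exact this
    have h5 : ((-1:ℝ)^(i*3)) = (-1)^i := by rw [pow_mul]; exact h3
    simp only [h4, h5]
    ring
  rw [← h, fs_succ, fs_succ, integral_add_adjacent_intervals] <;> exact fs_int s 1 _ _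

lemma tan2_bd (s : ℕ) (hs : 6 ≤ s) : 0 ≤ Real.tan (2 * dl s) ∧ Real.tan (2 * dl s) ≤ 1 := by
  have h1 := dl_pos s hs
  have h2 := dl_le s hs
  have := Real.pi_pos
  constructor
  · exact Real.tan_nonneg_of_nonneg_of_le_pi_div_two (by linarith) (by linarith)
  · rw [← Real.tan_pi_div_four]
    exact (Real.strictMonoOn_tan.le_iff_le ⟨by linarith, by linarith⟩ ⟨by linarith, by linarith⟩).2
      (by linarith)

lemma f2_nd (s j : ℕ) (hs : 6 ≤ s) (he : Even s) (hj : j ≤ s) :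
    fspline s 2 (nd s j) = -((Real.tan (dl s))^2/4 * (Real.tan (2 * dl s) *
      ((-1)^j * Real.sin (j * (2 * (π/s)))))) := by
  have h1 := dl_pos s hs
  have h2 := dl_le s hs
  have hpi := Real.pi_pos
  have key : fspline s 2 (nd s j) = (Real.tan (dl s))^2/4 *
      ∑ i ∈ Finset.range j, (-1:ℝ)^i * (Real.cos (i * (2*(π/s))) - Real.cos ((i+1) * (2*(π/s)))) := by
    clear h1 h2
    induction j with
    | zero => simp [nd_zero, fs_neg_one]
    | succ j ih =>
      rw [f2_seg s j hs he hj _ ⟨(nd_lt s j hs hj).le, le_rfl⟩, ih (by omega),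
        Finset.sum_range_succ, f1_nd s _ hs he hj, f1_nd s j hs he (by omega)]
      have c1 : Real.cos (j * (2*(π/s))) = 1 - 2 * Real.sin (j * (π/s))^2 := by
        rw [show (j:ℝ) * (2*(π/s)) = 2 * (j * (π/s)) by ring, Real.cos_two_mul, Real.cos_sq']; ring
      have c2 : Real.cos ((j+1) * (2*(π/s))) = 1 - 2 * Real.sin ((j+1) * (π/s))^2 := by
        rw [show ((j:ℝ)+1) * (2*(π/s)) = 2 * ((j+1) * (π/s)) by ring, Real.cos_two_mul, Real.cos_sq']; ring
      rw [c1, c2]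
      push_cast
      have e1 : ((-1:ℝ)^j)^2 = 1 := by rw [← pow_mul, mul_comm, pow_mul]; simp
      have e2 : ((-1:ℝ)^(j+1))^2 = 1 := by rw [← pow_mul, mul_comm, pow_mul]; simp
      simp only [neg_sq, mul_pow, e1, e2]
      ring
  rw [key, tele _ (by
    have := Real.cos_pos_of_mem_Ioo (x := 2 * (π/s)/2) ⟨by unfold dl at *; linarith, by unfold dl at *; linarith⟩
    exact this.ne'), show 2 * (π/s)/2 = 2 * dl s by unfold dl; ring]
  ring

lemma f2_le (s : ℕ) (hs : 6 ≤ s) (he : Even s) (x : ℝ) (hx : x ∈ Icc (-1:ℝ) 1) :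
    |fspline s 2 x| ≤ 3/4 * (Real.tan (dl s))^2 := by
  obtain ⟨i, hi, h⟩ := cover s hs x hx
  rw [f2_seg s i hs he hi x h]
  have a1 : |fspline s 2 (nd s i)| ≤ (Real.tan (dl s))^2/4 := by
    rw [f2_nd s i hs he hi.le, abs_neg, abs_mul, abs_mul, abs_sgn, abs_of_nonneg (tan2_bd s hs).1,
      abs_of_nonneg (by positivity)]
    have := Real.abs_sin_le_one (i * (2 * (π/s)))
    have h3 : Real.tan (2 * dl s) * |Real.sin (i * (2 * (π/s)))| ≤ 1 :=
      mul_le_one₀ (tan2_bd s hs).2 (abs_nonneg _) this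
    have : 0 ≤ (Real.tan (dl s))^2/4 := by positivity
    nlinarith
  have a2 : |(-1)^i * ((fspline s 1 x)^2 - (fspline s 1 (nd s i))^2) / 2| ≤ (Real.tan (dl s))^2/2 := by
    rw [abs_div, abs_sgn, abs_two]
    have b1 := sq_le_sq' (by linarith [(abs_le.1 (f1_le s hs he x hx)).1]) (abs_le.1 (f1_le s hs he x hx)).2
    have b2 := sq_le_sq' (by linarith [(abs_le.1 (f1_nd_le s i hs he hi.le)).1]) (abs_le.1 (f1_nd_le s i hs he hi.le)).2
    have : |(fspline s 1 x)^2 - (fspline s 1 (nd s i))^2| ≤ (Real.tan (dl s))^2 := by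
      rw [abs_le]; constructor <;> nlinarith [sq_nonneg (fspline s 1 x), sq_nonneg (fspline s 1 (nd s i))]
    linarith
  exact (abs_add_le _ _).trans (by linarith)

lemma tan_bd (s : ℕ) (hs : 6 ≤ s) : s * Real.tan (dl s) ≤ 1.63 := by
  have h1 := dl_pos s hs
  have h2 := dl_le s hs
  have h3 := Real.pi_lt_d4
  have h4 := Real.pi_pos
  have h5 := Real.one_sub_sq_div_two_le_cos (x := dl s)
  have hs0 : (0:ℝ) < s := by positivity
  have h6 : s * dl s = π/2 := by unfold dl; field_simp
  have h7 : (0.9657:ℝ) ≤ Real.cos (dl s) := by nlinarith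
  rw [Real.tan_eq_sin_div_cos, ← mul_div_assoc, div_le_iff₀ (by linarith)]
  have := Real.sin_lt h1
  nlinarith



lemma T_nd (s j i : ℕ) : (Polynomial.Chebyshev.T ℝ (j:ℤ)).eval (nd s i) =
    (-1)^j * Real.cos (i * (j * (π/s))) := by
  have h := Polynomial.Chebyshev.T_real_cos (π - i * π / s) (j:ℤ)
  rw [Real.cos_pi_sub] at h
  unfold nd
  rw [h]
  push_cast
  rw [show (j:ℝ) * (π - i * π / s) = j * π - i * (j * (π/s)) by ring, Real.cos_nat_mul_pi_sub]

lemma jU (s j : ℕ) (hs : 6 ≤ s) (he : Even s) :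
    (j:ℝ) * ∫ x in (-1:ℝ)..1, fspline s 0 x * (Polynomial.Chebyshev.U ℝ ((j:ℤ)-1)).eval x =
    -(-1)^j * ∑ i ∈ Finset.range s, (-1:ℝ)^i *
      (Real.cos (i * (j * (π/s))) - Real.cos ((i+1) * (j * (π/s)))) := by
  have h := seg_sum s s hs he le_rfl (fun x : ℝ => (Polynomial.Chebyshev.T ℝ (j:ℤ)).eval x)
    (fun x => (Polynomial.derivative (Polynomial.Chebyshev.T ℝ (j:ℤ))).eval x)
    (fun x => Polynomial.hasDerivAt _ x) (Polynomial.continuous _)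
  rw [nd_last s hs] at h
  simp only [smul_eq_mul, Polynomial.Chebyshev.T_derivative_eq_U, Polynomial.eval_mul, T_nd] at h
  rw [← intervalIntegral.integral_const_mul, Finset.mul_sum]
  have e : ∀ x, (j:ℝ) * (fspline s 0 x * (Polynomial.Chebyshev.U ℝ ((j:ℤ)-1)).eval x) =
    fspline s 0 x * (Polynomial.eval x (((j:ℤ) : Polynomial ℝ)) * (Polynomial.Chebyshev.U ℝ ((j:ℤ)-1)).eval x) := by
    intro x; simp; ring
  simp only [e, h]
  apply Finset.sum_congr rfl
  intro i _
  push_cast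
  ring

lemma LU0 (s j : ℕ) (hs : 6 ≤ s) (he : Even s) (hj : j < s) :
    ∫ x in (-1:ℝ)..1, fspline s 0 x * (Polynomial.Chebyshev.U ℝ ((j:ℤ)-1)).eval x = 0 := by
  rcases Nat.eq_zero_or_pos j with h0 | h0
  · subst h0; simp
  have h := jU s j hs he
  have hpi := Real.pi_pos
  have hs0 : (0:ℝ) < s := by positivity
  have hj' : (j:ℝ) < s := by exact_mod_cast hj
  have hc : Real.cos (j * (π/s)/2) ≠ 0 := by
    apply (Real.cos_pos_of_mem_Ioo ⟨_, _⟩).ne'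
    · have : 0 ≤ j * (π/s)/2 := by positivity
      linarith
    · have : j * (π/s) < π := by rw [← mul_div_assoc, div_lt_iff₀ hs0]; nlinarith
      linarith
  rw [tele _ hc, show (s:ℝ) * (j * (π/s)) = j * π by field_simp, Real.sin_nat_mul_pi] at h
  simpa [h0.ne'] using h

lemma LUs (s : ℕ) (hs : 6 ≤ s) (he : Even s) :
    ∫ x in (-1:ℝ)..1, fspline s 0 x * (Polynomial.Chebyshev.U ℝ ((s:ℤ)-1)).eval x = -2 := by
  have h := jU s s hs he
  have hs0 : (s:ℝ) ≠ 0 := by positivity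
  have e : ∀ i : ℕ, (-1:ℝ)^i * (Real.cos (i * (s * (π/s))) - Real.cos ((i+1) * (s * (π/s)))) = 2 := by
    intro i
    rw [show (s:ℝ) * (π/s) = π by field_simp, Real.cos_nat_mul_pi,
      show ((i:ℝ)+1) = ((i+1:ℕ):ℝ) by push_cast; ring, Real.cos_nat_mul_pi, pow_succ]
    rcases neg_one_pow_eq_or ℝ i with e | e <;> rw [e] <;> norm_num
  simp only [e, he.neg_one_pow, Finset.sum_const, Finset.card_range, nsmul_eq_mul] at h
  apply mul_left_cancel₀ hs0
  rw [h]; ring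

lemma LxU (s m : ℕ) (hs : 6 ≤ s) (he : Even s) : ∀ j : ℕ,
    (m + j < s → ∫ x in (-1:ℝ)..1, fspline s 0 x * (x^m * (Polynomial.Chebyshev.U ℝ ((j:ℤ)-1)).eval x) = 0) ∧
    (m + j = s → 1 ≤ j → ∫ x in (-1:ℝ)..1, fspline s 0 x * (x^m * (Polynomial.Chebyshev.U ℝ ((j:ℤ)-1)).eval x) = -2/2^m) := by
  induction m with
  | zero =>
    intro j
    constructor
    · intro h; simpa using LU0 s j hs he (by omega)
    · intro h _
      obtain rfl : j = s := by omega
      simpa using LUs j hs he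
  | succ m ih =>
    intro j
    rcases Nat.eq_zero_or_pos j with h0 | h0
    · subst h0; simp
    obtain ⟨j, rfl⟩ : ∃ i, j = i+1 := ⟨j-1, by omega⟩
    have hi : ∀ n : ℤ, IntervalIntegrable (fun x => fspline s 0 x *
        (x^m * (Polynomial.Chebyshev.U ℝ n).eval x)) volume (-1) 1 := fun n =>
      (f0_int s _ _).mul_continuousOn
        ((continuous_pow m).mul (Polynomial.continuous _)).continuousOn
    have key : ∫ x in (-1:ℝ)..1, fspline s 0 x * (x^(m+1) * (Polynomial.Chebyshev.U ℝ (((j+1:ℕ):ℤ)-1)).eval x)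
      = ((∫ x in (-1:ℝ)..1, fspline s 0 x * (x^m * (Polynomial.Chebyshev.U ℝ (((j+2:ℕ):ℤ)-1)).eval x)) +
        (∫ x in (-1:ℝ)..1, fspline s 0 x * (x^m * (Polynomial.Chebyshev.U ℝ ((j:ℤ)-1)).eval x)))/2 := by
      rw [← intervalIntegral.integral_add (hi _) (hi _), ← intervalIntegral.integral_div]
      apply integral_congr
      intro x _
      simp only
      have := Polynomial.Chebyshev.U_add_two ℝ ((j:ℤ)-1)
      rw [show (((j+2:ℕ):ℤ)-1) = (j:ℤ) - 1 + 2 by push_cast; ring, this,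
        show (((j+1:ℕ):ℤ)-1) = (j:ℤ) - 1 + 1 by push_cast; ring]
      simp only [Polynomial.eval_sub, Polynomial.eval_mul, Polynomial.eval_X, Polynomial.eval_ofNat]
      ring
    rw [key]
    constructor
    · intro h
      rw [(ih (j+2)).1 (by omega), (ih j).1 (by omega)]; simp
    · intro h _
      rw [(ih (j+2)).2 (by omega) (by omega), (ih j).1 (by omega)]
      rw [pow_succ]; field_simp; ring

lemma mom0 (s m : ℕ) (hs : 6 ≤ s) (he : Even s) :
    (m < s-1 → ∫ x in (-1:ℝ)..1, fspline s 0 x * x^m = 0) ∧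
    (m = s-1 → ∫ x in (-1:ℝ)..1, fspline s 0 x * x^m = -2/2^(s-1)) := by
  have := LxU s m hs he 1
  simp at this
  constructor
  · intro h; exact this.1 (by omega)
  · rintro rfl; exact this.2 (by omega)

lemma ofReal_mom (s k m : ℕ) (b : ℝ) : ∫ x in (-1:ℝ)..b, (fspline s k x : ℂ) * (x:ℂ)^m =
    ((∫ x in (-1:ℝ)..b, fspline s k x * x^m : ℝ) : ℂ) := by
  rw [← intervalIntegral.integral_ofReal]
  push_cast
  rfl

lemma mom_step (s k m : ℕ) (hs : 6 ≤ s) :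
    ∫ x in (-1:ℝ)..1, fspline s (k+1) x * x^m = 
      ((∫ x in (-1:ℝ)..1, fspline s k x * x^0) - ∫ x in (-1:ℝ)..1, fspline s k x * x^(m+1))/(m+1) := by
  have h := fs_parts s k hs (fun x => (x:ℂ)^(m+1)) (fun x => ((m+1:ℕ):ℂ) * (x:ℂ)^m)
    (fun x => by
      have := ((hasDerivAt_id x).ofReal_comp.pow (m+1))
      exact this.congr_deriv (by simp)) (by fun_prop) 1
  have e : ∀ x : ℝ, (fspline s (k+1) x : ℂ) * (((m+1:ℕ):ℂ) * (x:ℂ)^m) =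
    ((m+1:ℕ):ℂ) * ((fspline s (k+1) x : ℂ) * (x:ℂ)^m) := fun x => by ring
  simp only [e, intervalIntegral.integral_const_mul, ofReal_mom] at h
  have h' : ((m+1:ℕ):ℝ) * (∫ x in (-1:ℝ)..1, fspline s (k+1) x * x^m) = fspline s (k+1) 1 * 1 ^ (m+1)
    - ∫ x in (-1:ℝ)..1, fspline s k x * x^(m+1) := by exact_mod_cast h
  rw [eq_div_iff (by positivity)]
  push_cast at h'
  rw [fs_succ, one_pow] at h'
  simp only [pow_zero, mul_one]
  linarith

lemma mom (s k : ℕ) (hs : 6 ≤ s) (he : Even s) : ∀ m : ℕ,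
    (m + k < s-1 → ∫ x in (-1:ℝ)..1, fspline s k x * x^m = 0) ∧
    (m + k = s-1 → ∫ x in (-1:ℝ)..1, fspline s k x * x^m =
      (-1)^k * (-2/2^(s-1)) * (m.factorial / (s-1).factorial)) := by
  induction k with
  | zero =>
    intro m
    refine ⟨fun h => (mom0 s m hs he).1 h, fun h => ?_⟩
    rw [(mom0 s m hs he).2 h]
    have : m = s-1 := h
    rw [this, div_self (by positivity)]; simp
  | succ k ih =>
    intro m
    rw [mom_step s k m hs]
    constructor
    · intro h
      rw [(ih 0).1 (by omega), (ih (m+1)).1 (by omega)]; simp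
    · intro h
      rw [(ih 0).1 (by omega), (ih (m+1)).2 (by omega), Nat.factorial_succ]
      push_cast
      rw [pow_succ]
      field_simp
      ring

lemma fs_one (s k : ℕ) (hs : 6 ≤ s) (he : Even s) (hk : k < s-1) : fspline s (k+1) 1 = 0 := by
  have := (mom s k hs he 0).1 (by omega)
  rw [fs_succ]; simpa using this

lemma g_int (s : ℕ) (hs : 6 ≤ s) (he : Even s) : ∫ x in (-1:ℝ)..1, fspline s (s-1) x =
    2/2^(s-1) / (s-1).factorial := by
  have := (mom s (s-1) hs he 0).2 (by omega)
  have hodd : (-1 : ℝ) ^ (s-1) = -1 := by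
    have : Odd (s-1) := by
      obtain ⟨r, hr⟩ := he
      exact ⟨r-1, by omega⟩
    exact this.neg_one_pow
  rw [hodd] at this
  simp at this
  rw [this]; ring



noncomputable def JJ (s : ℕ) (ω : ℝ) (m k : ℕ) : ℂ :=
  ∫ x in (-1:ℝ)..1, (fspline s k x : ℂ) * ((x:ℂ)^m * Complex.exp (ω * x * Complex.I))

lemma norm_exp_aux (ω x : ℝ) : ‖Complex.exp (ω * x * Complex.I)‖ = 1 := by
  have := Complex.norm_exp_ofReal_mul_I (ω * x)
  simpa using this

lemma hasDeriv_aux (ω : ℝ) (m : ℕ) (x : ℝ) :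
    HasDerivAt (fun x : ℝ => (x:ℂ)^m * Complex.exp (ω * x * Complex.I))
      (m * ((x:ℂ)^(m-1) * Complex.exp (ω * x * Complex.I)) +
        ω * Complex.I * ((x:ℂ)^m * Complex.exp (ω * x * Complex.I))) x := by
  have h1 : HasDerivAt (fun x : ℝ => (x:ℂ)) 1 x := (hasDerivAt_id x).ofReal_comp
  have h2 := (h1.const_mul (ω:ℂ)).mul_const Complex.I
  exact ((h1.pow m).mul h2.cexp).congr_deriv (by simp only [Pi.pow_apply]; ring)

lemma JJ_int (s : ℕ) (ω : ℝ) (m k : ℕ) : IntervalIntegrable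
    (fun x : ℝ => (fspline s k x : ℂ) * ((x:ℂ)^m * Complex.exp (ω * x * Complex.I))) volume (-1) 1 :=
  (fs_intC s k _ _).mul_continuousOn (by fun_prop)

lemma JJ_comb (s : ℕ) (ω : ℝ) (m k : ℕ) :
    ∫ x in (-1:ℝ)..1, (fspline s k x : ℂ) * (m * ((x:ℂ)^(m-1) * Complex.exp (ω * x * Complex.I)) +
        ω * Complex.I * ((x:ℂ)^m * Complex.exp (ω * x * Complex.I))) =
    m * JJ s ω (m-1) k + ω * Complex.I * JJ s ω m k := by
  unfold JJ
  rw [← intervalIntegral.integral_const_mul, ← intervalIntegral.integral_const_mul,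
    ← intervalIntegral.integral_add ((JJ_int s ω _ k).const_mul _) ((JJ_int s ω _ k).const_mul _)]
  congr 1
  ext x
  ring

lemma norm_from_eq (ω : ℝ) (m : ℕ) (A B C : ℂ) (h : m * A + ω * Complex.I * B = C) :
    |ω| * ‖B‖ ≤ ‖C‖ + m * ‖A‖ := by
  have : ω * Complex.I * B = C - m * A := by rw [← h]; ring
  have h2 : |ω| * ‖B‖ = ‖ω * Complex.I * B‖ := by simp
  rw [h2, this]
  refine (norm_sub_le _ _).trans ?_
  simp

lemma JJ_step (s : ℕ) (hs : 6 ≤ s) (he : Even s) (ω : ℝ) (m k : ℕ) (hk : k < s - 1) :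
    |ω| * ‖JJ s ω m (k+1)‖ ≤ ‖JJ s ω m k‖ + m * ‖JJ s ω (m-1) (k+1)‖ := by
  have h := fs_parts s k hs _ _ (hasDeriv_aux ω m) (by fun_prop) 1
  rw [JJ_comb, fs_one s k hs he hk] at h
  refine (norm_from_eq ω m _ _ _ h).trans ?_
  simp [JJ]

lemma JJ_base (s : ℕ) (hs : 6 ≤ s) (he : Even s) (ω : ℝ) (m : ℕ) :
    |ω| * ‖JJ s ω m 0‖ ≤ 2 * s + m * ‖JJ s ω (m-1) 0‖ := by
  have h := seg_sum s s hs he le_rfl _ _ (hasDeriv_aux ω m) (by fun_prop)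
  rw [nd_last s hs] at h
  simp only [Complex.real_smul] at h
  rw [JJ_comb] at h
  refine (norm_from_eq ω m _ _ _ h).trans ?_
  gcongr
  refine (norm_sum_le _ _).trans ?_
  have : ∀ i : ℕ, ‖((nd s i : ℂ))^m * Complex.exp (ω * (nd s i) * Complex.I)‖ ≤ 1 := by
    intro i
    rw [norm_mul, norm_exp_aux, mul_one, norm_pow, Complex.norm_real]
    exact pow_le_one₀ (norm_nonneg _) (abs_le.2 (nd_mem s i))
  calc _ ≤ ∑ i ∈ Finset.range s, (2:ℝ) := by
        apply Finset.sum_le_sum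
        intro i _
        rw [norm_mul]
        have e : ‖(((-1:ℝ)^i : ℝ) : ℂ)‖ = 1 := by simp
        rw [e, one_mul]
        refine (norm_sub_le _ _).trans ?_
        linarith [this i, this (i+1)]
    _ = 2 * s := by simp; ring

lemma JJ_triv (s : ℕ) (ω : ℝ) (m k : ℕ) (B : ℝ)
    (hB : ∀ x ∈ Icc (-1:ℝ) 1, |fspline s k x| ≤ B) :
    ‖JJ s ω m k‖ ≤ B * ∫ x in (-1:ℝ)..1, |x|^m := by
  unfold JJ
  rw [← intervalIntegral.integral_const_mul]
  apply intervalIntegral.norm_integral_le_of_norm_le (by norm_num)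
  · filter_upwards with x hx
    rw [norm_mul, norm_mul, norm_exp_aux, mul_one, norm_pow, Complex.norm_real, Complex.norm_real]
    simp only [Real.norm_eq_abs]
    gcongr
    exact hB x ⟨hx.1.le, hx.2⟩
  · exact Continuous.intervalIntegrable (by fun_prop) _ _

lemma int_abs0 : ∫ x in (-1:ℝ)..1, |x|^0 = 2 := by norm_num
lemma int_abs1 : ∫ x in (-1:ℝ)..1, |x|^1 = 1 := by
  have c : ∀ a b, IntervalIntegrable (fun x : ℝ => |x|^1) volume a b := fun a b =>
    Continuous.intervalIntegrable (by fun_prop) _ _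
  rw [← integral_add_adjacent_intervals (c (-1) 0) (c 0 1)]
  have h1 : ∫ x in (-1:ℝ)..0, |x|^1 = ∫ x in (-1:ℝ)..0, -x := by
    apply integral_congr; intro x hx
    rw [uIcc_of_le (by norm_num)] at hx
    simp [abs_of_nonpos hx.2]
  have h2 : ∫ x in (0:ℝ)..1, |x|^1 = ∫ x in (0:ℝ)..1, x := by
    apply integral_congr; intro x hx
    rw [uIcc_of_le (by norm_num)] at hx
    simp [abs_of_nonneg hx.1]
  rw [h1, h2, intervalIntegral.integral_neg, integral_id, integral_id]; norm_num
lemma int_abs2 : ∫ x in (-1:ℝ)..1, |x|^2 = 2/3 := by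
  simp only [sq_abs]; rw [integral_pow]; norm_num

lemma stp (a X Y Z c y z : ℝ) (p : ℕ) (ha : 0 ≤ a) (hc : 0 ≤ c) (h : a * X ≤ Y + c * Z)
    (hY : a^p * Y ≤ y) (hZ : a^p * Z ≤ z) : a^(p+1) * X ≤ y + c * z := by
  calc a^(p+1) * X = a^p * (a * X) := by ring
    _ ≤ a^p * (Y + c * Z) := by gcongr
    _ = a^p * Y + c * (a^p * Z) := by ring
    _ ≤ _ := by gcongr

section
variable (s : ℕ) (hs : 6 ≤ s) (he : Even s) (ω : ℝ)
include hs he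

lemma stp' (m k p : ℕ) (hk : k < s-1) (y z : ℝ) (hY : |ω|^p * ‖JJ s ω m k‖ ≤ y)
    (hZ : |ω|^p * ‖JJ s ω (m-1) (k+1)‖ ≤ z) : |ω|^(p+1) * ‖JJ s ω m (k+1)‖ ≤ y + m * z :=
  stp _ _ _ _ _ _ _ p (abs_nonneg ω) (Nat.cast_nonneg m) (JJ_step s hs he ω m k hk) hY hZ

lemma stp0 (k p : ℕ) (hk : k < s-1) (y : ℝ) (hY : |ω|^p * ‖JJ s ω 0 k‖ ≤ y) :
    |ω|^(p+1) * ‖JJ s ω 0 (k+1)‖ ≤ y := by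
  have := stp' s hs he ω 0 k p hk y _ hY le_rfl
  simpa using this

lemma J00 : ‖JJ s ω 0 0‖ ≤ 2 := by
  have := JJ_triv s ω 0 0 1 (fun x _ => f0_le s x)
  rwa [int_abs0, one_mul] at this
lemma J10 : ‖JJ s ω 1 0‖ ≤ 1 := by
  have := JJ_triv s ω 1 0 1 (fun x _ => f0_le s x)
  rwa [int_abs1, one_mul] at this
lemma J20 : ‖JJ s ω 2 0‖ ≤ 2/3 := by
  have := JJ_triv s ω 2 0 1 (fun x _ => f0_le s x)
  rwa [int_abs2, one_mul] at this
lemma J01 : ‖JJ s ω 0 1‖ ≤ 2 * Real.tan (dl s) := by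
  have := JJ_triv s ω 0 1 _ (f1_le s hs he)
  rw [int_abs0] at this; linarith
lemma J11 : ‖JJ s ω 1 1‖ ≤ 2 * Real.tan (dl s) := by
  have := JJ_triv s ω 1 1 _ (f1_le s hs he)
  rw [int_abs1] at this; linarith [tan_nonneg' s hs]
lemma J02 : ‖JJ s ω 0 2‖ ≤ 3/2 * Real.tan (dl s)^2 := by
  have := JJ_triv s ω 0 2 _ (f2_le s hs he)
  rw [int_abs0] at this; linarith

lemma A0 (k : ℕ) (hk : k ≤ s-1) : |ω|^(k+1) * ‖JJ s ω 0 k‖ ≤ 2 * s := by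
  induction k with
  | zero => simpa using JJ_base s hs he ω 0
  | succ k ih => exact stp0 s hs he ω k _ (by omega) _ (ih (by omega))
lemma A1 (k : ℕ) (hk : k ≤ s-1) : |ω|^k * ‖JJ s ω 0 k‖ ≤ 2 := by
  induction k with
  | zero => simpa using J00 s hs he ω
  | succ k ih => exact stp0 s hs he ω k _ (by omega) _ (ih (by omega))
lemma A2 (k : ℕ) (hk : k+1 ≤ s-1) : |ω|^k * ‖JJ s ω 0 (k+1)‖ ≤ 2 * Real.tan (dl s) := by
  induction k with
  | zero => simpa using J01 s hs he ω
  | succ k ih => exact stp0 s hs he ω _ _ (by omega) _ (ih (by omega))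
lemma A3 (k : ℕ) (hk : k+2 ≤ s-1) : |ω|^k * ‖JJ s ω 0 (k+2)‖ ≤ 3/2 * Real.tan (dl s)^2 := by
  induction k with
  | zero => simpa using J02 s hs he ω
  | succ k ih => exact stp0 s hs he ω _ _ (by omega) _ (ih (by omega))
lemma B0 (k : ℕ) (hk : k ≤ s-1) : |ω|^(k+1) * ‖JJ s ω 1 k‖ ≤ 2 * s + 2 + 2 * k := by
  induction k with
  | zero =>
    have h1 := JJ_base s hs he ω 1
    have h2 := J00 s hs he ω
    simp at h1 ⊢
    linarith
  | succ k ih =>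
    refine (stp' s hs he ω 1 k _ (by omega) _ _ (ih (by omega)) (A1 s hs he ω (k+1) hk)).trans ?_
    push_cast; linarith
lemma B1 (k : ℕ) (hk : k ≤ s-1) : |ω|^k * ‖JJ s ω 1 k‖ ≤ 1 + 2 * Real.tan (dl s) * k := by
  induction k with
  | zero => simpa using J10 s hs he ω
  | succ k ih =>
    refine (stp' s hs he ω 1 k _ (by omega) _ _ (ih (by omega)) (A2 s hs he ω k hk)).trans ?_
    push_cast; linarith
lemma B2 (k : ℕ) (hk : k+1 ≤ s-1) : |ω|^k * ‖JJ s ω 1 (k+1)‖ ≤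
    2 * Real.tan (dl s) + 3/2 * Real.tan (dl s)^2 * k := by
  induction k with
  | zero => simpa using J11 s hs he ω
  | succ k ih =>
    refine (stp' s hs he ω 1 (k+1) _ (by omega) _ _ (ih (by omega)) (A3 s hs he ω k hk)).trans ?_
    push_cast; linarith
lemma C0 (k : ℕ) (hk : k ≤ s-1) : |ω|^(k+1) * ‖JJ s ω 2 k‖ ≤
    2 * s + 2 + 2 * k + 2 * Real.tan (dl s) * (k * (k+1)) := by
  induction k with
  | zero =>
    have h1 := JJ_base s hs he ω 2
    have h2 := J10 s hs he ω
    simp at h1 ⊢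
    linarith
  | succ k ih =>
    refine (stp' s hs he ω 2 k _ (by omega) _ _ (ih (by omega)) (B1 s hs he ω (k+1) hk)).trans ?_
    push_cast; linarith
lemma C1 (k : ℕ) (hk : k ≤ s-1) : |ω|^k * ‖JJ s ω 2 k‖ ≤
    2/3 + 4 * Real.tan (dl s) * k + 3/2 * Real.tan (dl s)^2 * (k * (k-1)) := by
  induction k with
  | zero => simpa using J20 s hs he ω
  | succ k ih =>
    refine (stp' s hs he ω 2 k _ (by omega) _ _ (ih (by omega)) (B2 s hs he ω k hk)).trans ?_
    push_cast; linarith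
lemma D0 (k : ℕ) (hk : k ≤ s-1) : |ω|^(k+1) * ‖JJ s ω 3 k‖ ≤
    2 * s + 2 + 2 * k + 6 * Real.tan (dl s) * (k * (k+1)) +
      3/2 * Real.tan (dl s)^2 * ((k-1) * k * (k+1)) := by
  induction k with
  | zero =>
    have h1 := JJ_base s hs he ω 3
    have h2 := J20 s hs he ω
    simp at h1 ⊢
    linarith
  | succ k ih =>
    refine (stp' s hs he ω 3 k _ (by omega) _ _ (ih (by omega)) (C1 s hs he ω (k+1) hk)).trans ?_
    push_cast; linarith
end

def VV (s : ℕ) : ℕ → ℝ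
  | 0 => 2 * s
  | 1 => 4 * s
  | 2 => 8 * s + 2
  | _ => 18 * s - 4

lemma JJ_main (s : ℕ) (hs : 6 ≤ s) (he : Even s) (ω : ℝ) (l : ℕ) (hl : l ≤ 3) :
    |ω|^s * ‖JJ s ω l (s-1)‖ ≤ VV s l := by
  have hk : ((s-1:ℕ):ℝ) = s - 1 := by rw [Nat.cast_sub (by omega)]; simp
  have h6 : (6:ℝ) ≤ s := by exact_mod_cast hs
  have hss : s - 1 + 1 = s := by omega
  have ht := tan_bd s hs
  have ht0 := tan_nonneg' s hs
  have a0 := A0 s hs he ω (s-1) le_rfl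
  have b0 := B0 s hs he ω (s-1) le_rfl
  have c0 := C0 s hs he ω (s-1) le_rfl
  have d0 := D0 s hs he ω (s-1) le_rfl
  rw [hss] at a0 b0 c0 d0
  rw [hk] at b0 c0 d0
  set τ := Real.tan (dl s)
  have hx : τ * ((s-1) * s) ≤ 1.63 * (s-1) := by nlinarith
  have hy : τ^2 * ((s-1-1) * (s-1) * s) ≤ 1.63^2 * (s-1) := by
    have e1 : (s*τ)^2 ≤ 1.63^2 := pow_le_pow_left₀ (by positivity) ht 2
    have e2 : ((s:ℝ)-1-1) ≤ s := by linarith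
    calc τ^2 * ((s-1-1) * (s-1) * s) ≤ τ^2 * (s * (s-1) * s) := by
          have : (0:ℝ) ≤ s - 1 := by linarith
          gcongr
      _ = (s*τ)^2 * (s-1) := by ring
      _ ≤ _ := by
          have : (0:ℝ) ≤ s - 1 := by linarith
          gcongr
  have e : ((s:ℝ)-1+1) = s := by ring
  rw [e] at c0 d0
  interval_cases l <;> simp only [VV]
  · exact a0
  · linarith
  · linarith
  · linarith



lemma part_sum (s : ℕ) (hs : 6 ≤ s) (k : ℕ) :
    ∑ n ∈ Finset.range k, (1 / (2 * (n:ℝ) + 3))^s ≤ 1/324 * (1 - 1/(k+1)) := by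
  induction k with
  | zero => simp
  | succ k ih =>
    rw [Finset.sum_range_succ]
    have h : (1 / (2 * (k:ℝ) + 3))^s ≤ 1/324 * (1/(k+1) - 1/(k+2)) := by
      have hx0 : (0:ℝ) ≤ 1 / (2 * (k:ℝ) + 3) := by positivity
      have hx1 : 1 / (2 * (k:ℝ) + 3) ≤ 1/3 := by
        apply one_div_le_one_div_of_le <;> linarith [(Nat.cast_nonneg k : (0:ℝ) ≤ k)]
      calc (1 / (2 * (k:ℝ) + 3))^s ≤ (1 / (2 * (k:ℝ) + 3))^6 :=
            pow_le_pow_of_le_one hx0 (by linarith) hs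
        _ = (1 / (2 * (k:ℝ) + 3))^4 * (1 / (2 * (k:ℝ) + 3))^2 := by ring
        _ ≤ (1/3)^4 * (1/(4 * ((k+1) * (k+2)))) := by
            have : (1 / (2 * (k:ℝ) + 3))^2 ≤ 1/(4 * ((k+1) * (k+2))) := by
              rw [div_pow, one_pow]
              apply one_div_le_one_div_of_le (by positivity)
              nlinarith
            gcongr
        _ = _ := by field_simp; ring
    push_cast
    have e : (k:ℝ) + 1 + 1 = k + 2 := by ring
    rw [e]
    linarith

noncomputable def qq (s : ℕ) (n : ℤ) : ℝ := (1 / |2 * (n:ℝ) - 1|)^s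

lemma qq_sum (s : ℕ) (hs : 6 ≤ s) : Summable (qq s) ∧ ∑' n, qq s n ≤ 2 + 1/162 := by
  have h0 : ∀ n : ℕ, 0 ≤ (1 / (2 * (n:ℝ) + 3))^s := fun n => by positivity
  have hle : ∀ k, ∑ n ∈ Finset.range k, (1 / (2 * (n:ℝ) + 3))^s ≤ 1/324 := by
    intro k
    refine (part_sum s hs k).trans ?_
    have : (0:ℝ) ≤ 1/((k:ℝ)+1) := by positivity
    linarith
  have hsum := summable_of_sum_range_le h0 hle
  have hts := Real.tsum_le_of_sum_range_le h0 hle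
  have h2 : ∀ n : ℕ, qq s (-((n:ℤ)+1)) = (1 / (2 * (n:ℝ) + 3))^s := by
    intro n
    unfold qq
    congr 2
    push_cast
    rw [abs_of_nonpos] <;> linarith [(Nat.cast_nonneg n : (0:ℝ) ≤ n)]
  have h3 : ∀ n : ℕ, qq s (((n+2:ℕ):ℤ)) = (1 / (2 * (n:ℝ) + 3))^s := by
    intro n
    unfold qq
    congr 2
    push_cast
    rw [abs_of_nonneg] <;> linarith [(Nat.cast_nonneg n : (0:ℝ) ≤ n)]
  have hA : HasSum (fun n : ℕ => qq s (n:ℤ)) (∑' n : ℕ, (1 / (2 * (n:ℝ) + 3))^s + 2) := by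
    have := (hasSum_nat_add_iff (f := fun n : ℕ => qq s (n:ℤ)) 2
      (g := ∑' n : ℕ, (1 / (2 * (n:ℝ) + 3))^s)).1 (by simp only [h3]; exact hsum.hasSum)
    have e : ∑ i ∈ Finset.range 2, qq s (i:ℤ) = 2 := by
      simp only [Finset.sum_range_succ, Finset.sum_range_zero, qq]
      norm_num
    rwa [e] at this
  have hB : HasSum (fun n : ℕ => qq s (-((n:ℤ)+1))) (∑' n : ℕ, (1 / (2 * (n:ℝ) + 3))^s) := by
    simp only [h2]; exact hsum.hasSum
  have := HasSum.of_nat_of_neg_add_one hA hB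
  refine ⟨this.summable, ?_⟩
  rw [this.tsum_eq]
  linarith

noncomputable def clampf (s : ℕ) (x : ℝ) : ℝ := fspline s (s-1) (max (-1) (min 1 x))

noncomputable def SS (s N : ℕ) (l : ℕ) (t : ℝ) : ℂ :=
  ∑ k ∈ Finset.Icc (-(N : ℤ)) (N : ℤ),
        (gtilde s ((k : ℝ) / (2 * ((N : ℝ) + 1))) : ℂ) * ((k:ℂ)^l * Complex.exp ((k : ℂ) * t * Complex.I))

noncomputable def FF (s N l : ℕ) (t : ℝ) (x : ℝ) : ℂ :=
  (clampf s (x / ((N:ℝ)+1)) : ℂ) * ((x:ℂ)^l * Complex.exp (t * x * Complex.I))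

noncomputable def TT (s N l : ℕ) (t : ℝ) (n : ℤ) : ℂ :=
  ((N:ℂ)+1)^(l+1) * JJ s (((N:ℝ)+1) * (t - 2 * π * n)) l (s-1)

section
variable (s N : ℕ) (hs : 6 ≤ s) (he : Even s) (l : ℕ) (t : ℝ)
include hs he

lemma clampf_cont : Continuous (clampf s) := by
  have h : s - 1 = (s-2)+1 := by omega
  unfold clampf
  rw [h]
  exact (fs_cont s (s-2)).comp (by fun_prop)

lemma clampf_zero (x : ℝ) (hx : 1 ≤ |x|) : clampf s x = 0 := by
  have h : s - 1 = (s-2)+1 := by omega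
  unfold clampf
  rcases le_abs.1 hx with h1 | h1
  · rw [min_eq_left h1, max_eq_right (by norm_num), h]
    exact fs_one s (s-2) hs he (by omega)
  · rw [min_eq_right (by linarith), max_eq_left (by linarith), h]
    exact fs_neg_one s _

omit hs he in
lemma clampf_eq (x : ℝ) (hx : x ∈ Icc (-1:ℝ) 1) : clampf s x = fspline s (s-1) x := by
  unfold clampf
  rw [min_eq_right hx.2, max_eq_right hx.1]

lemma FF_zero (x : ℝ) (hx : (N:ℝ)+1 ≤ |x|) : FF s N l t x = 0 := by
  unfold FF
  have hM : (0:ℝ) < (N:ℝ)+1 := by positivity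
  rw [clampf_zero s hs he]
  · simp
  · rw [abs_div, abs_of_pos hM, le_div_iff₀ hM]; linarith

lemma FF_cont : Continuous (FF s N l t) := by
  unfold FF
  have := clampf_cont s hs he
  fun_prop

lemma FF_sum : ∑' n : ℤ, FF s N l t n = SS s N l t := by
  have hM : (0:ℝ) < (N:ℝ)+1 := by positivity
  rw [tsum_eq_sum (s := Finset.Icc (-(N : ℤ)) (N : ℤ))]
  · unfold SS
    apply Finset.sum_congr rfl
    intro k hk
    rw [Finset.mem_Icc] at hk
    have k1 : -(N:ℝ) ≤ k := by exact_mod_cast hk.1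
    have k2 : (k:ℝ) ≤ N := by exact_mod_cast hk.2
    unfold FF gtilde
    rw [clampf_eq]
    · rw [show 2 * ((k:ℝ)/(2 * ((N:ℝ)+1))) = k/((N:ℝ)+1) by field_simp]
      push_cast
      rw [mul_comm (t:ℂ) (k:ℂ)]
    · constructor
      · rw [le_div_iff₀ hM]; linarith
      · rw [div_le_iff₀ hM]; linarith
  · intro k hk
    apply FF_zero s N hs he
    rw [Finset.mem_Icc, ← abs_le] at hk
    push Not at hk
    have : ((N+1:ℤ):ℝ) ≤ ((|k| : ℤ):ℝ) := by exact_mod_cast hk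
    push_cast at this
    exact this

lemma FF_fourier (n : ℤ) : FourierTransform.fourier (FF s N l t) (n:ℝ) = TT s N l t n := by
  have hM : (0:ℝ) < (N:ℝ)+1 := by positivity
  rw [Real.fourier_real_eq_integral_exp_smul]
  set M : ℝ := (N:ℝ)+1 with hMdef
  rw [← setIntegral_eq_integral_of_forall_compl_eq_zero (s := Ioc (-M) M)]
  · rw [← integral_of_le (by linarith)]
    have h := intervalIntegral.smul_integral_comp_mul_left (a := -1) (b := 1)
      (fun x : ℝ => Complex.exp ((-2 * π * x * (n:ℝ) : ℝ) * Complex.I) • FF s N l t x) M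
    rw [show M * -1 = -M by ring, mul_one] at h
    rw [← h]
    unfold TT JJ
    have e : ((N:ℂ)+1) = (M:ℂ) := by rw [hMdef]; push_cast; rfl
    rw [e, pow_succ', mul_assoc, ← intervalIntegral.integral_const_mul, Complex.real_smul]
    congr 1
    apply integral_congr
    intro x hx
    rw [uIcc_of_le (by norm_num)] at hx
    simp only [FF, smul_eq_mul]
    rw [← hMdef, mul_div_cancel_left₀ _ hM.ne', clampf_eq s x hx]
    have e2 : Complex.exp (((M * (t - 2 * π * n) : ℝ):ℂ) * x * Complex.I) =
      Complex.exp ((-2 * π * (M * x) * (n:ℝ) : ℝ) * Complex.I) *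
        Complex.exp (t * ((M * x : ℝ):ℂ) * Complex.I) := by
      rw [← Complex.exp_add]; congr 1; push_cast; ring
    rw [e2]
    push_cast
    ring
  · intro x hx
    rw [FF_zero s N hs he, smul_zero]
    rw [mem_Ioc, not_and_or] at hx
    push Not at hx
    rcases hx with h | h
    · exact le_abs.2 (Or.inr (by linarith))
    · exact le_abs.2 (Or.inl (by linarith))

lemma poisson (hT : Summable (TT s N l t)) : SS s N l t = ∑' n, TT s N l t n := by
  have hF := FF_fourier s N hs he l t
  have := Real.tsum_eq_tsum_fourier_of_rpow_decay_of_summable (FF_cont s N hs he l t)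
    (b := 2) (by norm_num) (by
      apply Asymptotics.IsBigO.of_bound 1
      filter_upwards [(isCompact_Icc (a := -((N:ℝ)+1)) (b := (N:ℝ)+1)).compl_mem_cocompact] with x hx
      rw [FF_zero s N hs he]
      · simp only [norm_zero]; positivity
      · rw [mem_compl_iff, mem_Icc, ← abs_le] at hx
        push Not at hx
        exact hx.le) (by simpa only [hF] using hT) 0
  rw [← FF_sum s N hs he]
  simpa [hF] using this
end



lemma VV_nonneg (s l : ℕ) (hs : 6 ≤ s) : 0 ≤ VV s l := by
  have : (6:ℝ) ≤ s := by exact_mod_cast hs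
  rcases l with _ | _ | _ | l <;> simp only [VV] <;> linarith

lemma TT_bd (s N l : ℕ) (hs : 6 ≤ s) (he : Even s) (hl : l ≤ 3) (t : ℝ) (n : ℤ) (c a : ℝ)
    (hc : 0 < c) (ha : 0 < a) (h : c * a ≤ |t - 2 * π * n|) :
    ‖TT s N l t n‖ ≤ ((N:ℝ)+1)^(l+1) * VV s l / (((N:ℝ)+1)^s * c^s) * (1/a)^s := by
  have hM : (0:ℝ) < (N:ℝ)+1 := by positivity
  have hV := VV_nonneg s l hs
  have hm := JJ_main s hs he (((N:ℝ)+1) * (t - 2 * π * n)) l hl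
  have hn : ‖((N:ℂ)+1)^(l+1)‖ = ((N:ℝ)+1)^(l+1) := by
    rw [norm_pow]
    congr 1
    rw [show (N:ℂ)+1 = (((N:ℝ)+1 : ℝ) : ℂ) by push_cast; ring, Complex.norm_real, Real.norm_of_nonneg hM.le]
  unfold TT
  rw [norm_mul, hn]
  set j := ‖JJ s (((N:ℝ)+1) * (t - 2 * π * n)) l (s-1)‖ with hj
  have hj0 : 0 ≤ j := norm_nonneg _
  rw [abs_mul, abs_of_pos hM] at hm
  have h1 : (((N:ℝ)+1) * (c * a))^s * j ≤ VV s l := by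
    refine le_trans ?_ hm
    gcongr
  have h2 : j ≤ VV s l / (((N:ℝ)+1) * (c * a))^s := by
    rw [le_div_iff₀ (by positivity)]; linarith
  calc _ ≤ ((N:ℝ)+1)^(l+1) * (VV s l / (((N:ℝ)+1) * (c * a))^s) := by gcongr
    _ = _ := by rw [mul_pow, mul_pow, div_pow, one_pow]; field_simp

lemma int_abs_pos (n : ℤ) : 0 < |2 * (n:ℝ) - 1| := by
  rw [abs_pos]
  intro h
  have : 2 * n - 1 = 0 := by exact_mod_cast h
  omega

lemma key_pos (t : ℝ) (h0 : 0 < t) (h1 : t ≤ π) (n : ℤ) :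
    t * |2 * (n:ℝ) - 1| ≤ |t - 2 * π * n| := by
  rcases le_or_gt n 0 with hn | hn
  · have : (n:ℝ) ≤ 0 := by exact_mod_cast hn
    rw [abs_of_nonpos (by linarith), abs_of_nonneg (by nlinarith)]
    nlinarith
  · have : (1:ℝ) ≤ n := by exact_mod_cast hn
    rw [abs_of_nonneg (by linarith), abs_of_nonpos (by nlinarith)]
    nlinarith

lemma SS_of_bd (s N l : ℕ) (hs : 6 ≤ s) (he : Even s) (t : ℝ) (C : ℝ) (hC : 0 ≤ C)
    (e : ℤ ≃ ℤ) (h : ∀ n, ‖TT s N l t n‖ ≤ C * qq s (e n)) :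
    ‖SS s N l t‖ ≤ C * (2 + 1/162) := by
  obtain ⟨q1, q2⟩ := qq_sum s hs
  have q3 : Summable (fun n => C * qq s (e n)) := (e.summable_iff.2 q1).mul_left C
  have hT : Summable (TT s N l t) := Summable.of_norm_bounded q3 h
  rw [poisson s N hs he l t hT]
  refine (tsum_of_norm_bounded q3.hasSum h).trans ?_
  rw [tsum_mul_left, e.tsum_eq]
  gcongr

lemma SS_bd (s N l : ℕ) (hs : 6 ≤ s) (he : Even s) (hl : l ≤ 3) (t : ℝ)
    (ht : t ∈ Set.Icc (-π) π) (ht0 : t ≠ 0) :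
    ‖SS s N l t‖ ≤ ((N:ℝ)+1)^(l+1) * VV s l / (((N:ℝ)+1)^s * |t|^s) * (2 + 1/162) := by
  have hV := VV_nonneg s l hs
  rcases lt_or_gt_of_ne ht0 with h | h
  · apply SS_of_bd s N l hs he t _ (by positivity) (Equiv.neg ℤ)
    intro n
    unfold qq
    apply TT_bd s N l hs he hl t n |t| _ (abs_pos.2 ht0) (int_abs_pos _)
    rw [abs_of_neg h]
    refine (key_pos (-t) (by linarith) (by linarith [ht.1]) _).trans (le_of_eq ?_)
    rw [← abs_neg]
    congr 1
    simp only [Equiv.neg_apply]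
    push_cast
    ring
  · apply SS_of_bd s N l hs he t _ (by positivity) (Equiv.refl ℤ)
    intro n
    unfold qq
    apply TT_bd s N l hs he hl t n |t| _ (abs_pos.2 ht0) (int_abs_pos _)
    rw [abs_of_pos h]
    exact key_pos t h ht.2 n

lemma TT_zero (s N : ℕ) (hs : 6 ≤ s) (he : Even s) :
    TT s N 0 0 0 = ((((N:ℝ)+1) * (2/2^(s-1) / (s-1).factorial) : ℝ) : ℂ) := by
  rw [← g_int s hs he]
  unfold TT JJ
  simp [intervalIntegral.integral_ofReal]

lemma SS_zero (s N : ℕ) : SS s N 0 0 = (gnorm s N : ℂ) := by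
  unfold SS gnorm
  simp

lemma key_zero (n : ℤ) (hn : n ≠ 0) : 2 * π / 3 * |2 * (n:ℝ) - 1| ≤ |(0:ℝ) - 2 * π * n| := by
  have hp := Real.pi_pos
  rw [zero_sub, abs_neg, abs_mul, abs_of_pos (by positivity : 0 < 2 * π)]
  have : |2 * (n:ℝ) - 1| ≤ 3 * |(n:ℝ)| := by
    have h1 : (1:ℝ) ≤ |(n:ℝ)| := by exact_mod_cast Int.one_le_abs hn
    calc _ ≤ |2 * (n:ℝ)| + |(1:ℝ)| := abs_sub _ _
      _ ≤ _ := by rw [abs_mul]; norm_num; linarith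
  nlinarith

lemma gnorm_err (s N : ℕ) (hs : 6 ≤ s) (he : Even s) :
    |gnorm s N - ((N:ℝ)+1) * (2/2^(s-1) / (s-1).factorial)| ≤
      ((N:ℝ)+1) * (2 * s) / (((N:ℝ)+1)^s * (2 * π / 3)^s) * (2 + 1/162) := by
  obtain ⟨q1, q2⟩ := qq_sum s hs
  have hp := Real.pi_pos
  set C : ℝ := ((N:ℝ)+1) * (2 * s) / (((N:ℝ)+1)^s * (2 * π / 3)^s) with hC
  have hC0 : 0 ≤ C := by positivity
  have q3 : Summable (fun n => C * qq s n) := q1.mul_left C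
  have h : ∀ n : ℤ, n ≠ 0 → ‖TT s N 0 0 n‖ ≤ C * qq s n := by
    intro n hn
    have := TT_bd s N 0 hs he (by norm_num) 0 n (2 * π / 3) _ (by positivity) (int_abs_pos n) (key_zero n hn)
    simpa [VV, qq, hC] using this
  have h' : ∀ n : ℤ, ‖(if n = 0 then 0 else TT s N 0 0 n)‖ ≤ C * qq s n := by
    intro n
    split_ifs with h0
    · rw [norm_zero]; unfold qq; positivity
    · exact h n h0
  have hS' : Summable (fun n : ℤ => if n = 0 then 0 else TT s N 0 0 n) :=
    Summable.of_norm_bounded q3 h'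
  have hT : Summable (TT s N 0 0) := by
    refine (summable_congr_cofinite ?_).1 hS'
    filter_upwards [(Set.finite_singleton (0:ℤ)).compl_mem_cofinite] with n hn
    rw [if_neg (by simpa using hn)]
  have hP := poisson s N hs he 0 0 hT
  rw [hT.tsum_eq_add_tsum_ite 0, SS_zero, TT_zero s N hs he] at hP
  have hb := tsum_of_norm_bounded q3.hasSum h'
  rw [← Real.norm_eq_abs, ← Complex.norm_real, Complex.ofReal_sub, hP, add_sub_cancel_left]
  refine hb.trans ?_
  rw [tsum_mul_left]
  gcongr

lemma err_small (s N : ℕ) (hs : 6 ≤ s) (hN : 2 * s ≤ N) :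
    ((N:ℝ)+1) * (2 * s) / (((N:ℝ)+1)^s * (2 * π / 3)^s) * (2 + 1/162) ≤
      0.0125 * (((N:ℝ)+1) * (2/2^(s-1) / (s-1).factorial)) := by
  have hp := Real.pi_pos
  have hp' := Real.pi_gt_d4
  have hM : (0:ℝ) < (N:ℝ)+1 := by positivity
  have hsN : 2 * (s:ℝ) ≤ N := by exact_mod_cast hN
  have hfac : (s.factorial : ℝ) ≤ (s:ℝ)^s := by exact_mod_cast Nat.factorial_le_pow s
  have hfs : (s.factorial : ℝ) = s * (s-1).factorial := by
    exact_mod_cast (Nat.mul_factorial_pred (by omega)).symm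
  have h2s : (2:ℝ)^s = 2 * 2^(s-1) := by
    rw [← pow_succ']; congr 1; omega
  have hr : (s * 3 / (π * ((N:ℝ)+1)))^s ≤ (0.4775)^6 := by
    have h1 : s * 3 / (π * ((N:ℝ)+1)) ≤ 0.4775 := by
      rw [div_le_iff₀ (by positivity)]
      nlinarith
    calc _ ≤ (0.4775:ℝ)^s := by gcongr
      _ ≤ _ := pow_le_pow_of_le_one (by norm_num) (by norm_num) hs
  have hfp : (0:ℝ) < (s-1).factorial := by positivity
  have h3 : (s.factorial : ℝ) * (3 / (π * ((N:ℝ)+1)))^s ≤ (0.4775)^6 := by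
    refine le_trans ?_ hr
    rw [mul_div_assoc, mul_pow]
    gcongr
  have e : ((N:ℝ)+1) * (2 * s) / (((N:ℝ)+1)^s * (2 * π / 3)^s) * (2 + 1/162)
      = (((N:ℝ)+1) * (2/2^(s-1) / (s-1).factorial)) *
        ((s.factorial : ℝ) * (3 / (π * ((N:ℝ)+1)))^s * ((2+1/162)/2)) := by
    rw [hfs, div_pow, div_pow, mul_pow, mul_pow, h2s]
    field_simp
  rw [e, mul_comm (0.0125:ℝ)]
  gcongr
  nlinarith

lemma gnorm_lb (s N : ℕ) (hs : 6 ≤ s) (he : Even s) (hN : 2 * s ≤ N) :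
    0.9875 * (((N:ℝ)+1) * (2/2^(s-1) / (s-1).factorial)) ≤ gnorm s N := by
  have h := (gnorm_err s N hs he).trans (err_small s N hs hN)
  have := (abs_le.1 h).1
  linarith

lemma SS_deriv (s N l : ℕ) (t : ℝ) :
    HasDerivAt (SS s N l) (Complex.I * SS s N (l+1) t) t := by
  unfold SS
  rw [Finset.mul_sum]
  apply HasDerivAt.fun_sum
  intro k _
  have h1 : HasDerivAt (fun t : ℝ => (k:ℂ) * (t:ℂ) * Complex.I) ((k:ℂ) * 1 * Complex.I) t :=
    ((Complex.ofRealCLM.hasDerivAt (x := t)).const_mul (k:ℂ)).mul_const _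
  have h2 := (h1.cexp.const_mul ((k:ℂ)^l)).const_mul (gtilde s ((k : ℝ) / (2 * ((N : ℝ) + 1))) : ℂ)
  refine h2.congr_deriv ?_
  ring

lemma sigma_deriv (s N l : ℕ) :
    iteratedDeriv l (sigmaT s N) =
      fun t => ((1 / (gnorm s N : ℂ)) * (Complex.I^l * SS s N l t)).re := by
  induction l with
  | zero =>
    funext t
    simp [sigmaT, SS]
  | succ l ih =>
    rw [iteratedDeriv_succ, ih]
    funext t
    have h := ((SS_deriv s N l t).const_mul (Complex.I^l)).const_mul (1 / (gnorm s N : ℂ))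
    have h2 := (Complex.reCLM.hasFDerivAt (x := (1 / (gnorm s N : ℂ)) * (Complex.I^l * SS s N l t))).comp_hasDerivAt t h
    refine h2.deriv.trans ?_
    simp only [Complex.reCLM_apply]
    congr 1
    ring

lemma cConst_eq (s l : ℕ) : cConst l s = 1.02 * (Nat.factorial (s - 1)) * 2 ^ s * (VV s l / 2) := by
  rcases l with _ | _ | _ | l <;> simp only [cConst, VV] <;> ring

lemma main_thm
    (s N : ℕ) (hs_even : Even s) (hs : 6 ≤ s) (hN : 2 * s ≤ N)
    (t : ℝ) (ht : t ∈ Set.Icc (-π) π) (ht0 : t ≠ 0)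
    (l : ℕ) (hl : l ≤ 3) :
    |iteratedDeriv l (sigmaT s N) t| ≤ cConst l s / (((N : ℝ) + 1) ^ (s - l) * |t| ^ s) := by
  have hM : (0:ℝ) < (N:ℝ)+1 := by positivity
  have hV := VV_nonneg s l hs
  have hg := gnorm_lb s N hs hs_even hN
  have hS := SS_bd s N l hs hs_even hl t ht ht0
  have hta : 0 < |t| := abs_pos.2 ht0
  have hL : 0 < 0.9875 * (((N:ℝ)+1) * (2/2^(s-1) / (s-1).factorial)) := by positivity
  have h2s : (2:ℝ)^s = 2 * 2^(s-1) := by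
    rw [← pow_succ']; congr 1; omega
  have hMs : ((N:ℝ)+1)^s = ((N:ℝ)+1)^(s-l) * ((N:ℝ)+1)^l := by
    rw [← pow_add]; congr 1; omega
  rw [sigma_deriv, cConst_eq]
  calc _ ≤ ‖(1 / (gnorm s N : ℂ)) * (Complex.I^l * SS s N l t)‖ := Complex.abs_re_le_norm _
    _ = ‖SS s N l t‖ / gnorm s N := by
      rw [norm_mul, norm_mul, norm_pow, Complex.norm_I, one_pow, one_mul, norm_div, norm_one,
        Complex.norm_real, Real.norm_of_nonneg (hL.trans_le hg).le]
      ring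
    _ ≤ (((N:ℝ)+1)^(l+1) * VV s l / (((N:ℝ)+1)^s * |t|^s) * (2 + 1/162)) /
        (0.9875 * (((N:ℝ)+1) * (2/2^(s-1) / (s-1).factorial))) := by gcongr
    _ = ((s-1).factorial * 2^s * VV s l / (((N : ℝ) + 1) ^ (s - l) * |t| ^ s)) *
        ((2+1/162) / 0.9875 / 4) := by
      rw [h2s, hMs, pow_succ]
      field_simp
      ring
    _ ≤ ((s-1).factorial * 2^s * VV s l / (((N : ℝ) + 1) ^ (s - l) * |t| ^ s)) * 0.51 := by
      gcongr
      norm_num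
    _ = _ := by ring


end

open scoped Real

theorem localization_of_trigonometric_kernel_and_derivatives
    (s N : ℕ) (hs_even : Even s) (hs : 6 ≤ s) (hN : 2 * s ≤ N)
    (t : ℝ) (ht : t ∈ Set.Icc (-π) π) (ht0 : t ≠ 0)
    (l : ℕ) (hl : l ≤ 3) :
    |iteratedDeriv l (sigmaT s N) t| ≤ cConst l s / (((N : ℝ) + 1) ^ (s - l) * |t| ^ s) := by
  exact main_thm s N hs_even hs hN t ht ht0 l hl
end

section
/- Let s be an even integer with s ≥ 8 and let N ≥ 2s. Then c_s(N+1)² ≤ |σ̃_N″(0)| ≤ c̃_s(N+1)² with c_s = 0.999/(2(s+1)) and c̃_s = 1.001/(2(s+1)); d_s(N+1)⁴ ≤ |σ̃_N^{(4)}(0)| ≤ d̃_s(N+1)⁴ with d_s = 3·0.999/(4(s+2)(s+1)) and d̃_s = 3·1.001/(4(s+2)(s+1)); and in the case s = 8, for all N ≥ 20, |σ̃_N^{(6)}(0)| ≤ 1.011·(15/8)·(8!/11!)·(N+1)⁶. -/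
open scoped Real

noncomputable def kn (s j : ℕ) : ℝ := Real.cos (j * Real.pi / s)
noncomputable def tp (n : ℕ) (y : ℝ) : ℝ := if 0 < y then y ^ n else 0

lemma tp_mono (n : ℕ) : Monotone (tp n) := by
  intro a b hab
  unfold tp
  split_ifs with h1 h2
  · gcongr
  · exact absurd (lt_of_lt_of_le h1 hab) h2
  · positivity
  · exact le_rfl

lemma tp_int (n : ℕ) (c a b : ℝ) :
    IntervalIntegrable (fun t => tp n (t - c)) MeasureTheory.volume a b := by
  apply Monotone.intervalIntegrable
  intro x y hxy
  exact tp_mono n (by linarith)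

lemma tp_integral (n : ℕ) (c x : ℝ) (hc : -1 ≤ c) (hx : -1 ≤ x) :
    ∫ t in (-1 : ℝ)..x, tp n (t - c) = tp (n + 1) (x - c) / (n + 1) := by
  have key : ∀ y, -1 ≤ y → y ≤ c → ∫ t in (-1 : ℝ)..y, tp n (t - c) = 0 := by
    intro y h1 hy
    rw [intervalIntegral.integral_congr_Ioo_of_le (g := fun _ => (0:ℝ)) h1]
    · simp
    · intro t ht
      have : ¬ (0 < t - c) := by have := ht.2; linarith
      simp [tp, this]
  rcases le_or_gt x c with h | h
  · rw [key x hx h]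
    have : ¬ (0 < x - c) := by linarith
    simp [tp, this]
  · rw [← intervalIntegral.integral_add_adjacent_intervals (b := c) (tp_int _ _ _ _) (tp_int _ _ _ _),
      key c hc le_rfl, intervalIntegral.integral_congr_Ioo_of_le (g := fun t => (t - c) ^ n) h.le]
    · have : 0 < x - c := by linarith
      rw [intervalIntegral.integral_comp_sub_right (fun t => t ^ n)]
      simp [tp, this]
    · intro t ht
      have : 0 < t - c := by have := ht.1; linarith
      simp [tp] at this ⊢
      intro h; linarith

lemma alt_sum (a n : ℕ) : ∑ j ∈ Finset.range (2 * n + 1), (-1 : ℝ) ^ (a + j) = (-1) ^ a := by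
  induction n with
  | zero => simp
  | succ n ih =>
    rw [show 2 * (n + 1) + 1 = 2 * n + 1 + 1 + 1 by ring, Finset.sum_range_succ,
      Finset.sum_range_succ, ih]
    ring

lemma f0_repr (s : ℕ) (hs : Even s) (h0 : 0 < s) (x : ℝ) (hx : x ∈ Set.Ioo (-1 : ℝ) 1)
    (hne : ∀ j < 2 * s, x ≠ kn s j) :
    fspline s 0 x = ∑ j ∈ Finset.range (2 * s), (-1 : ℝ) ^ j * tp 0 (x - kn s j) := by
  have hπ := Real.pi_pos
  have hsR : (0 : ℝ) < s := by exact_mod_cast h0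
  set θ := Real.arccos x with hθ
  have hcos : Real.cos θ = x := Real.cos_arccos hx.1.le hx.2.le
  have hθ0 : 0 < θ := Real.arccos_pos.2 hx.2
  have hθπ : θ < Real.pi := by
    rw [hθ]; exact Real.arccos_lt_pi.2 hx.1
  set a := ⌊s * θ / Real.pi⌋₊ with ha
  have ha1 : (a : ℝ) ≤ s * θ / Real.pi := Nat.floor_le (by positivity)
  have ha2 : s * θ / Real.pi < a + 1 := Nat.lt_floor_add_one _
  rw [le_div_iff₀ hπ] at ha1
  rw [div_lt_iff₀ hπ] at ha2
  have has : a < s := by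
    have : (a : ℝ) * Real.pi < s * Real.pi := by nlinarith
    exact_mod_cast lt_of_mul_lt_mul_right this hπ.le
  have hane : (a : ℝ) * Real.pi ≠ s * θ := by
    intro h
    apply hne a (by omega)
    rw [kn, ← hcos, h, mul_div_cancel_left₀ _ hsR.ne']
  have ha1' : (a : ℝ) * Real.pi < s * θ := lt_of_le_of_ne ha1 hane
  have hsin : 0 < Real.sin θ := Real.sin_pos_of_pos_of_lt_pi hθ0 hθπ
  have hU : (Polynomial.Chebyshev.U ℝ ((s : ℤ) - 1)).eval x * Real.sin θ = Real.sin (s * θ) := by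
    have := Polynomial.Chebyshev.U_real_cos θ ((s : ℤ) - 1)
    rw [hcos] at this
    rw [this]; push_cast; congr 1; ring
  have hpos : 0 < (-1 : ℝ) ^ a * Real.sin (s * θ) := by
    rw [← Real.sin_sub_nat_mul_pi]
    apply Real.sin_pos_of_pos_of_lt_pi <;> linarith
  have hpos' : 0 < (-1 : ℝ) ^ a * (Polynomial.Chebyshev.U ℝ ((s : ℤ) - 1)).eval x := by
    rw [← hU, ← mul_assoc] at hpos
    exact pos_of_mul_pos_left hpos hsin.le
  have hL : fspline s 0 x = -(-1 : ℝ) ^ a := by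
    have hodd : Odd (s - 1) := by
      rcases hs with ⟨r, hr⟩; exact ⟨r - 1, by omega⟩
    simp only [fspline]
    rw [hodd.neg_one_pow]
    rcases Nat.even_or_odd a with h | h
    · rw [h.neg_one_pow] at hpos' ⊢
      rw [Real.sign_of_pos (by linarith)]; ring
    · rw [h.neg_one_pow] at hpos' ⊢
      rw [Real.sign_of_neg (by linarith)]; ring
  have hiff : ∀ j < 2 * s, (0 < x - kn s j ↔ (a < j ∧ j < 2 * s - a)) := by
    intro j hj
    rw [sub_pos, ← hcos, kn]
    constructor
    · intro h
      constructor
      · by_contra hc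
        push Not at hc
        have : (j : ℝ) ≤ a := by exact_mod_cast hc
        have h2 : j * Real.pi / s ≤ θ := by
          rw [div_le_iff₀ hsR]; nlinarith
        have := Real.cos_le_cos_of_nonneg_of_le_pi (by positivity) hθπ.le h2
        linarith
      · by_contra hc
        push Not at hc
        have : (2 * s : ℝ) ≤ a + j := by exact_mod_cast (by omega : 2 * s ≤ a + j)
        have h2 : 2 * Real.pi - j * Real.pi / s ≤ θ := by
          rw [sub_le_iff_le_add, ← sub_le_iff_le_add', le_div_iff₀ hsR]; nlinarith
        have h3 : (j : ℝ) ≤ 2 * s := by exact_mod_cast hj.le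
        have h4 : 0 ≤ 2 * Real.pi - j * Real.pi / s := by
          rw [sub_nonneg, div_le_iff₀ hsR]; nlinarith
        have := Real.cos_le_cos_of_nonneg_of_le_pi h4 hθπ.le h2
        rw [Real.cos_two_pi_sub] at this
        linarith
    · rintro ⟨h1, h2⟩
      have h1' : (a : ℝ) + 1 ≤ j := by exact_mod_cast h1
      have h2' : (a : ℝ) + j + 1 ≤ 2 * s := by exact_mod_cast (by omega : a + j + 1 ≤ 2 * s)
      have h3 : θ < j * Real.pi / s := by
        rw [lt_div_iff₀ hsR]; nlinarith
      have h4 : θ < 2 * Real.pi - j * Real.pi / s := by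
        rw [lt_sub_iff_add_lt, ← lt_sub_iff_add_lt', div_lt_iff₀ hsR]; nlinarith
      rcases le_or_gt (j * Real.pi / s) Real.pi with h5 | h5
      · exact Real.cos_lt_cos_of_nonneg_of_le_pi hθ0.le h5 h3
      · rw [← Real.cos_two_pi_sub (j * Real.pi / s)]
        exact Real.cos_lt_cos_of_nonneg_of_le_pi hθ0.le (by linarith) h4
  rw [hL]
  have : ∑ j ∈ Finset.range (2 * s), (-1 : ℝ) ^ j * tp 0 (x - kn s j)
      = ∑ j ∈ Finset.Ico (a + 1) (2 * s - a), (-1 : ℝ) ^ j := by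
    rw [show Finset.Ico (a + 1) (2 * s - a) = (Finset.range (2 * s)).filter
      (fun j => a < j ∧ j < 2 * s - a) by ext j; simp; omega, Finset.sum_filter]
    apply Finset.sum_congr rfl
    intro j hj
    rw [Finset.mem_range] at hj
    simp only [tp, hiff j hj]
    split_ifs <;> simp
  rw [this, Finset.sum_Ico_eq_sum_range,
    show 2 * s - a - (a + 1) = 2 * (s - a - 1) + 1 by omega, alt_sum]
  ring

lemma kn_ge (s j : ℕ) : -1 ≤ kn s j := Real.neg_one_le_cos _

lemma f_repr (s : ℕ) (hs : Even s) (h0 : 0 < s) (n : ℕ) (x : ℝ) (hx : x ∈ Set.Icc (-1 : ℝ) 1) :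
    fspline s (n + 1) x
      = ∑ j ∈ Finset.range (2 * s), (-1 : ℝ) ^ j * tp (n + 1) (x - kn s j) / (n + 1).factorial := by
  induction n generalizing x with
  | zero =>
    have : fspline s (0 + 1) x = ∫ t in (-1 : ℝ)..x, fspline s 0 t := rfl
    rw [this, intervalIntegral.integral_congr_ae
      (g := fun t => ∑ j ∈ Finset.range (2 * s), (-1 : ℝ) ^ j * tp 0 (t - kn s j))]
    · rw [intervalIntegral.integral_finsetSum (fun j _ => (tp_int _ _ _ _).const_mul _)]
      apply Finset.sum_congr rfl
      intro j _
      rw [intervalIntegral.integral_const_mul, tp_integral _ _ _ (kn_ge _ _) hx.1]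
      simp
    · filter_upwards [(insert 1 ((Finset.range (2 * s)).image (kn s)) : Finset ℝ).finite_toSet.countable.ae_notMem (MeasureTheory.volume)] with t ht ht2
      rw [Set.uIoc_of_le hx.1] at ht2
      simp at ht
      apply f0_repr s hs h0 t ⟨ht2.1, lt_of_le_of_ne (ht2.2.trans hx.2) ht.1⟩
      intro j hj h
      exact ht.2 j hj h.symm
  | succ n ih =>
    have : fspline s (n + 1 + 1) x = ∫ t in (-1 : ℝ)..x, fspline s (n + 1) t := by rw [fspline]
    rw [this, intervalIntegral.integral_congr
      (g := fun t => ∑ j ∈ Finset.range (2 * s), (-1 : ℝ) ^ j * tp (n + 1) (t - kn s j) / (n + 1).factorial)]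
    · rw [intervalIntegral.integral_finsetSum (fun j _ => ((tp_int _ _ _ _).const_mul _).div_const _)]
      apply Finset.sum_congr rfl
      intro j _
      rw [intervalIntegral.integral_div, intervalIntegral.integral_const_mul,
        tp_integral _ _ _ (kn_ge _ _) hx.1, Nat.factorial_succ (n + 1)]
      push_cast
      field_simp
    · intro t ht
      rw [Set.uIcc_of_le hx.1] at ht
      exact ih t ⟨ht.1, ht.2.trans hx.2⟩

lemma root_sum (s : ℕ) (h0 : 0 < s) (r : ℤ) :
    ∑ j ∈ Finset.range (2 * s), (Complex.exp (2 * Real.pi * Complex.I / (2 * s : ℕ)) ^ r) ^ j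
      = if ((2 * s : ℕ) : ℤ) ∣ r then ((2 * s : ℕ) : ℂ) else 0 := by
  have hp := Complex.isPrimitiveRoot_exp (2 * s) (by omega)
  set ζ := Complex.exp (2 * Real.pi * Complex.I / (2 * s : ℕ)) with hζ
  split_ifs with h
  · rw [(hp.zpow_eq_one_iff_dvd r).2 h]; simp
  · have h1 : ζ ^ r ≠ 1 := fun h' => h ((hp.zpow_eq_one_iff_dvd r).1 h')
    rw [geom_sum_eq h1]
    have : (ζ ^ r) ^ (2 * s) = 1 := by
      rw [← zpow_natCast, ← zpow_mul, mul_comm, zpow_mul, zpow_natCast, hp.pow_eq_one, one_zpow]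
    rw [this]; simp

lemma L_formula (s : ℕ) (h0 : 0 < s) (n : ℕ) :
    ((∑ j ∈ Finset.range (2 * s), (-1 : ℝ) ^ j * (kn s j) ^ n : ℝ) : ℂ)
      = (1 / 2) ^ n * ∑ a ∈ Finset.range (n + 1), (n.choose a : ℂ) *
        (if ((2 * s : ℕ) : ℤ) ∣ (s + 2 * a - n : ℤ) then ((2 * s : ℕ) : ℂ) else 0) := by
  simp_rw [← root_sum s h0]
  set ζ := Complex.exp (2 * Real.pi * Complex.I / (2 * s : ℕ)) with hζ
  have hsC : (s : ℂ) ≠ 0 := by exact_mod_cast h0.ne'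
  have hζ0 : ζ ≠ 0 := Complex.exp_ne_zero _
  have hζs : ζ ^ (s : ℤ) = -1 := by
    rw [zpow_natCast, hζ, ← Complex.exp_nat_mul, ← Complex.exp_pi_mul_I]
    congr 1; push_cast; field_simp
  have hk : ∀ j : ℕ, ((kn s j : ℝ) : ℂ) = (1 / 2) * (ζ ^ (j : ℤ) + ζ ^ (-(j : ℤ))) := by
    intro j
    rw [zpow_neg, zpow_natCast, hζ, ← Complex.exp_nat_mul, ← Complex.exp_neg, kn, Complex.ofReal_cos,
      Complex.cos]
    have : (j : ℂ) * (2 * Real.pi * Complex.I / (2 * s : ℕ)) = ((j * Real.pi / s : ℝ) : ℂ) * Complex.I := by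
      push_cast; field_simp
    rw [this]; ring_nf
  push_cast
  simp_rw [hk, mul_pow, add_pow, Finset.mul_sum]
  rw [Finset.sum_comm]
  apply Finset.sum_congr rfl
  intro a ha
  apply Finset.sum_congr rfl
  intro j hj
  rw [Finset.mem_range] at ha
  have : (ζ ^ ((s : ℤ) + 2 * a - n)) ^ j = (-1) ^ j * ((ζ ^ (j : ℤ)) ^ a * (ζ ^ (-(j : ℤ))) ^ (n - a)) := by
    rw [← hζs]
    simp only [← zpow_natCast, ← zpow_mul, ← zpow_add₀ hζ0]
    congr 1
    push_cast [show a ≤ n by omega]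
    ring
  rw [this]
  ring

lemma L_small (s : ℕ) (h0 : 0 < s) (n : ℕ) (hn : n < s) :
    ∑ j ∈ Finset.range (2 * s), (-1 : ℝ) ^ j * (kn s j) ^ n = 0 := by
  have := L_formula s h0 n
  generalize ∑ j ∈ Finset.range (2 * s), (-1 : ℝ) ^ j * (kn s j) ^ n = Z at this ⊢
  rw [Finset.sum_eq_zero] at this
  · rw [mul_zero] at this; exact_mod_cast this
  · intro a ha
    rw [Finset.mem_range] at ha
    rw [if_neg, mul_zero]
    rintro ⟨c, hc⟩
    push_cast at hc
    have h1 : 0 < c := by by_contra h; push Not at h; nlinarith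
    have h2 : c < 1 := by by_contra h; push Not at h; nlinarith
    omega

lemma L_big (s : ℕ) (h0 : 0 < s) (p : ℕ) (hp : p < s) :
    ∑ j ∈ Finset.range (2 * s), (-1 : ℝ) ^ j * (kn s j) ^ (s + 2 * p)
      = (1 / 2) ^ (s + 2 * p) * (4 * s * (s + 2 * p).choose p) := by
  have := L_formula s h0 (s + 2 * p)
  generalize ∑ j ∈ Finset.range (2 * s), (-1 : ℝ) ^ j * (kn s j) ^ (s + 2 * p) = Z at this ⊢
  rw [← Finset.sum_subset (s₁ := {p, s + p})] at this
  · rw [Finset.sum_pair (by omega), if_pos ⟨0, by push_cast; ring⟩, if_pos ⟨1, by push_cast; ring⟩,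
      Nat.choose_symm_of_eq_add (show s + 2 * p = (s + p) + p by ring)] at this
    apply Complex.ofReal_injective
    rw [this]; push_cast; ring
  · intro a; simp; omega
  · intro a ha hna
    rw [Finset.mem_range] at ha
    rw [if_neg, mul_zero]
    rintro ⟨c, hc⟩
    push_cast at hc
    have hc' : (a : ℤ) - p = s * c := by linarith
    have h1 : -1 < c := by by_contra h; push Not at h; nlinarith
    have h2 : c < 2 := by by_contra h; push Not at h; nlinarith
    apply hna
    have : c = 0 ∨ c = 1 := by omega
    rcases this with rfl | rfl
    · simp; left; omega
    · simp; right; omega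

lemma bern_add_one (n : ℕ) (t : ℝ) :
    bernoulliFun n (t + 1) = bernoulliFun n t + n * t ^ (n - 1) := by
  have := congrArg (fun p => (Polynomial.map (algebraMap ℚ ℝ) p).eval t)
    (Polynomial.bernoulli_comp_one_add_X n)
  simp [Polynomial.map_comp] at this
  simp only [bernoulliFun]
  rw [add_comm t 1]
  simpa using this

noncomputable def A1_s17 (m n : ℕ) (u t : ℝ) : ℝ :=
  ∑ i ∈ Finset.range (m + 1), (m.choose i : ℝ) * u ^ (m - i) *
    (bernoulliFun (n + i + 1) (t - u) / ((n + i + 1 : ℕ) : ℝ))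

noncomputable def A2_s17 (m n : ℕ) (u t : ℝ) : ℝ :=
  ∑ l ∈ Finset.range (n + 1), (n.choose l : ℝ) * (-u) ^ (n - l) *
    (bernoulliFun (m + l + 1) t / ((m + l + 1 : ℕ) : ℝ))

lemma A1_diff (m n : ℕ) (u t : ℝ) : A1_s17 m n u (t + 1) = A1_s17 m n u t + t ^ m * (t - u) ^ n := by
  have h : t ^ m = ((t - u) + u) ^ m := by ring
  rw [h, add_pow, A1_s17, A1_s17, Finset.sum_mul, ← Finset.sum_add_distrib]
  apply Finset.sum_congr rfl
  intro i _
  have hne : ((n + i + 1 : ℕ) : ℝ) ≠ 0 := by positivity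
  rw [show t + 1 - u = (t - u) + 1 by ring, bern_add_one, Nat.add_sub_cancel, pow_add]
  field_simp

lemma A2_diff (m n : ℕ) (u t : ℝ) : A2_s17 m n u (t + 1) = A2_s17 m n u t + t ^ m * (t - u) ^ n := by
  rw [sub_eq_add_neg, add_pow, A2_s17, A2_s17, Finset.mul_sum, ← Finset.sum_add_distrib]
  apply Finset.sum_congr rfl
  intro i _
  have hne : ((m + i + 1 : ℕ) : ℝ) ≠ 0 := by positivity
  rw [bern_add_one, Nat.add_sub_cancel, pow_add]
  field_simp

lemma bern_int_shift (k : ℕ) (u : ℝ) : ∫ t in (0:ℝ)..1, bernoulliFun k (t - u) = (-u) ^ k := by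
  rw [intervalIntegral.integral_comp_sub_right (fun t => bernoulliFun k t),
    intervalIntegral.integral_eq_sub_of_hasDerivAt (fun x _ => antideriv_bernoulliFun k x)
      (intervalIntegrable_bernoulliFun k _ _),
    show (1 : ℝ) - u = (0 - u) + 1 by ring, bern_add_one]
  have : (k : ℝ) + 1 ≠ 0 := by positivity
  simp
  field_simp
  ring

lemma A_const (m n : ℕ) (u t : ℝ) : A1_s17 m n u t - A2_s17 m n u t =
    ∑ i ∈ Finset.range (m + 1), (m.choose i : ℝ) * u ^ (m - i) *
    ((-u) ^ (n + i + 1) / ((n + i + 1 : ℕ) : ℝ)) := by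
  obtain ⟨P, hP⟩ : ∃ P : Polynomial ℝ, ∀ t, P.eval t = A1_s17 m n u t - A2_s17 m n u t := by
    refine ⟨∑ i ∈ Finset.range (m + 1), Polynomial.C ((m.choose i : ℝ) * u ^ (m - i)) *
      (((Polynomial.bernoulli (n + i + 1)).map (algebraMap ℚ ℝ)).comp
        (Polynomial.X - Polynomial.C u) * Polynomial.C (((n + i + 1 : ℕ) : ℝ)⁻¹)) -
      ∑ l ∈ Finset.range (n + 1), Polynomial.C ((n.choose l : ℝ) * (-u) ^ (n - l)) *
      (((Polynomial.bernoulli (m + l + 1)).map (algebraMap ℚ ℝ)) *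
        Polynomial.C (((m + l + 1 : ℕ) : ℝ)⁻¹)), ?_⟩
    intro t
    rw [Polynomial.eval_sub, Polynomial.eval_finsetSum, Polynomial.eval_finsetSum]
    simp only [Polynomial.eval_mul, Polynomial.eval_C, Polynomial.eval_comp, Polynomial.eval_sub,
      Polynomial.eval_X, A1_s17, A2_s17, bernoulliFun, div_eq_mul_inv]
  have hper : ∀ k : ℕ, P.eval (k : ℝ) = P.eval 0 := by
    intro k
    induction k with
    | zero => simp
    | succ k ih =>
      rw [← ih, hP, hP, Nat.cast_succ, A1_diff, A2_diff]; ring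
  have hPc : P = Polynomial.C (P.eval 0) := by
    apply Polynomial.eq_of_infinite_eval_eq
    apply (Set.infinite_range_of_injective (Nat.cast_injective (R := ℝ))).mono
    rintro _ ⟨k, rfl⟩
    simp [hper k]
  have hconst : ∀ t, A1_s17 m n u t - A2_s17 m n u t = P.eval 0 := by
    intro t; rw [← hP, hPc]; simp
  have hc : ∀ k, Continuous (bernoulliFun k) := continuous_bernoulliFun
  have i1 : ∫ t in (0:ℝ)..1, A1_s17 m n u t = ∑ i ∈ Finset.range (m + 1), (m.choose i : ℝ) * u ^ (m - i) *
    ((-u) ^ (n + i + 1) / ((n + i + 1 : ℕ) : ℝ)) := by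
    simp only [A1_s17]
    rw [intervalIntegral.integral_finsetSum]
    · apply Finset.sum_congr rfl
      intro i _
      rw [intervalIntegral.integral_const_mul, intervalIntegral.integral_div, bern_int_shift]
    · intro i _
      apply Continuous.intervalIntegrable
      have := hc (n + i + 1)
      fun_prop
  have i2 : ∫ t in (0:ℝ)..1, A2_s17 m n u t = 0 := by
    simp only [A2_s17]
    rw [intervalIntegral.integral_finsetSum]
    · apply Finset.sum_eq_zero
      intro i _
      rw [intervalIntegral.integral_const_mul, intervalIntegral.integral_div,
        integral_bernoulliFun_eq_zero (by omega)]
      simp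
    · intro i _
      apply Continuous.intervalIntegrable
      have := hc (m + i + 1)
      fun_prop
  have c1 : Continuous (A1_s17 m n u) := by
    unfold A1_s17; fun_prop
  have c2 : Continuous (A2_s17 m n u) := by
    unfold A2_s17; fun_prop
  have i3 : ∫ t in (0:ℝ)..1, (A1_s17 m n u t - A2_s17 m n u t) = P.eval 0 := by
    simp only [hconst]; simp
  rw [intervalIntegral.integral_sub (c1.intervalIntegrable _ _) (c2.intervalIntegrable _ _), i1, i2,
    sub_zero] at i3
  rw [hconst, i3]

lemma A1_sum (m n : ℕ) (u : ℝ) (a : ℤ) (K : ℕ) :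
    A1_s17 m n u ((a : ℝ) + K) = A1_s17 m n u a
      + ∑ k ∈ Finset.range K, ((a : ℝ) + k) ^ m * ((a : ℝ) + k - u) ^ n := by
  induction K with
  | zero => simp
  | succ K ih =>
    rw [Finset.sum_range_succ, Nat.cast_succ, ← add_assoc, A1_diff, ih]; ring

lemma tp_sum (m n N : ℕ) (hn : 0 < n) (u : ℝ) (hu : |u| ≤ (N : ℝ) + 1) :
    ∑ k ∈ Finset.Icc (-(N : ℤ)) (N : ℤ), (k : ℝ) ^ m * tp n ((k : ℝ) - u)
      = A1_s17 m n u ((N : ℝ) + 1) - A1_s17 m n u (⌈u⌉ : ℤ) := by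
  rw [abs_le] at hu
  have h1 : ⌈u⌉ ≤ (N : ℤ) + 1 := by
    rw [Int.ceil_le]; push_cast; exact hu.2
  have h2 : -((N : ℤ) + 1) ≤ ⌈u⌉ := by
    have := Int.le_ceil u
    have : (-((N : ℝ) + 1)) ≤ (⌈u⌉ : ℝ) := by linarith
    exact_mod_cast this
  obtain ⟨K, hK⟩ : ∃ K : ℕ, (N : ℤ) + 1 = ⌈u⌉ + K := ⟨((N : ℤ) + 1 - ⌈u⌉).toNat, by omega⟩
  have hKR : (N : ℝ) + 1 = (⌈u⌉ : ℝ) + K := by exact_mod_cast hK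
  rw [hKR, A1_sum]
  have e1 : ∑ k ∈ Finset.Icc (-(N : ℤ)) (N : ℤ), (k : ℝ) ^ m * tp n ((k : ℝ) - u)
      = ∑ k ∈ Finset.Ico (-((N : ℤ) + 1)) ((N : ℤ) + 1), (k : ℝ) ^ m * tp n ((k : ℝ) - u) := by
    apply Finset.sum_subset
    · intro k; simp; omega
    · intro k hk hk2
      simp at hk hk2
      have : k = -((N : ℤ) + 1) := by omega
      subst this
      have : ¬ (0 < (((-((N : ℤ) + 1)) : ℤ) : ℝ) - u) := by push_cast; linarith
      simp only [tp, this, if_false, mul_zero]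
  have e2 : ∑ k ∈ Finset.Ico (⌈u⌉) ((N : ℤ) + 1), (k : ℝ) ^ m * ((k : ℝ) - u) ^ n
      = ∑ k ∈ Finset.Ico (-((N : ℤ) + 1)) ((N : ℤ) + 1), (k : ℝ) ^ m * tp n ((k : ℝ) - u) := by
    have : ∀ k ∈ Finset.Ico (⌈u⌉) ((N : ℤ) + 1), (k : ℝ) ^ m * ((k : ℝ) - u) ^ n
        = (k : ℝ) ^ m * tp n ((k : ℝ) - u) := by
      intro k hk
      simp at hk
      have h3 : u ≤ k := Int.ceil_le.1 hk.1
      rcases h3.eq_or_lt with h | h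
      · simp [tp, h, hn.ne']
      · simp [tp, h]
    rw [Finset.sum_congr rfl this]
    apply Finset.sum_subset
    · intro k; simp; omega
    · intro k hk hk2
      simp at hk hk2
      have h3 : k < ⌈u⌉ := by by_contra h; push Not at h; have := hk2 h; omega
      have : (k : ℝ) < u := Int.lt_ceil.1 h3
      have : ¬ (0 < (k : ℝ) - u) := by linarith
      simp only [tp, this, if_false, mul_zero]
  rw [e1, ← e2, add_sub_cancel_left]
  rw [hK]
  symm
  apply Finset.sum_bij (fun (k : ℕ) _ => ⌈u⌉ + (k : ℤ))
  · intro k hk; simp at hk ⊢; exact hk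
  · intro a _ b _ h; simpa using h
  · intro b hb
    simp only [Finset.mem_Ico] at hb
    exact ⟨(b - ⌈u⌉).toNat, by simp; omega, by omega⟩
  · intro k _; push_cast; ring

lemma bern_bound (k : ℕ) (hk : 2 ≤ k) (x : ℝ) (hx : x ∈ Set.Icc (0:ℝ) 1) :
    |bernoulliFun k x| ≤ 4 * k.factorial / (2 * Real.pi) ^ k := by
  have h := hasSum_one_div_nat_pow_mul_fourier hk hx
  have hz := hasSum_zeta_two.mul_left 2
  have hb := h.norm_le_of_bounded hz (by
    intro n
    rcases Nat.eq_zero_or_pos n with rfl | hn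
    · simp [show k ≠ 0 by omega]
    · have hn1 : (1 : ℝ) ≤ n := by exact_mod_cast hn
      have h2 : ‖(fourier (n : ℤ) (x : UnitAddCircle) + (-1 : ℂ) ^ k * fourier (-(n : ℤ)) (x : UnitAddCircle))‖ ≤ 2 := by
        refine (norm_add_le _ _).trans ?_
        rw [norm_mul, norm_pow, norm_neg, norm_one, one_pow, one_mul]
        simp only [fourier_apply, Circle.norm_coe]
        norm_num
      rw [norm_mul, norm_div, norm_one, norm_pow, Complex.norm_natCast, mul_comm]
      have h3 : (1 : ℝ) / (n : ℝ) ^ k ≤ 1 / (n : ℝ) ^ 2 := by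
        gcongr
      gcongr)
  rw [norm_mul, norm_div, norm_neg, norm_pow, Complex.norm_real, Real.norm_eq_abs, Complex.norm_natCast,
    norm_mul, norm_mul, Complex.norm_I, Complex.norm_real, Real.norm_eq_abs, abs_of_pos Real.pi_pos] at hb
  norm_num at hb
  have hπ := Real.pi_pos
  have hπ2 := Real.pi_lt_d2
  have hf : (0 : ℝ) < k.factorial := by positivity
  rw [le_div_iff₀ (by positivity)]
  have h4 : (2 * Real.pi) ^ k / k.factorial * |bernoulliFun k x| ≤ 4 := by
    refine hb.trans ?_
    nlinarith
  rw [div_mul_eq_mul_div, div_le_iff₀ hf] at h4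
  linarith

lemma fact_bound (n i : ℕ) (hi : i ≤ n + 2) :
    ((n + i).factorial : ℝ) ≤ n.factorial * (2 * ((n : ℝ) + 1)) ^ i := by
  induction i with
  | zero => simp
  | succ i ih =>
    have := ih (by omega)
    rw [← add_assoc, Nat.factorial_succ, pow_succ]
    push_cast
    have h2 : (n : ℝ) + i + 1 ≤ 2 * ((n : ℝ) + 1) := by
      have : (i : ℝ) + 1 ≤ n + 2 := by exact_mod_cast hi
      linarith
    calc ((n : ℝ) + i + 1) * (n + i).factorial
        ≤ (2 * ((n : ℝ) + 1)) * (n.factorial * (2 * ((n : ℝ) + 1)) ^ i) := by gcongr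
      _ = _ := by ring

lemma A1_bound (m n : ℕ) (hm : m ≤ 6) (hn : 7 ≤ n) (M u : ℝ) (hM : 2 * ((n : ℝ) + 1) ≤ M)
    (hu : |u| ≤ M) :
    |A1_s17 m n u (⌈u⌉ : ℤ)| ≤ 12 * n.factorial * M ^ m / (2 * Real.pi) ^ (n + 1) := by
  have hπ := Real.pi_gt_three
  have hM0 : 0 < M := by
    have : (0 : ℝ) ≤ n := by positivity
    linarith
  have hx : ((⌈u⌉ : ℤ) : ℝ) - u ∈ Set.Icc (0 : ℝ) 1 :=
    ⟨by linarith [Int.le_ceil u], by linarith [Int.ceil_lt_add_one u]⟩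
  have hterm : ∀ i ∈ Finset.range (m + 1),
      |(m.choose i : ℝ) * u ^ (m - i) *
        (bernoulliFun (n + i + 1) ((⌈u⌉ : ℤ) - u) / ((n + i + 1 : ℕ) : ℝ))|
      ≤ (4 * n.factorial * M ^ m / (2 * Real.pi) ^ (n + 1)) *
        ((1 / 6 : ℝ) ^ i * 1 ^ (m - i) * m.choose i) := by
    intro i hi
    rw [Finset.mem_range] at hi
    have hb := bern_bound (n + i + 1) (by omega) _ hx
    have hpos : (0 : ℝ) < ((n + i + 1 : ℕ) : ℝ) := by positivity
    have h1 : |bernoulliFun (n + i + 1) ((⌈u⌉ : ℤ) - u) / ((n + i + 1 : ℕ) : ℝ)|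
        ≤ 4 * (n + i).factorial / (2 * Real.pi) ^ (n + i + 1) := by
      rw [abs_div, abs_of_pos hpos, div_le_iff₀ hpos]
      refine hb.trans (le_of_eq ?_)
      rw [Nat.factorial_succ]; push_cast; ring
    have h2 := fact_bound n i (by omega)
    have h3 : (2 * ((n : ℝ) + 1)) ^ i ≤ (2 * Real.pi) ^ i * (1 / 6) ^ i * M ^ i := by
      rw [← mul_pow, ← mul_pow]
      apply pow_le_pow_left₀ (by positivity)
      nlinarith
    rw [abs_mul, abs_mul, abs_pow, Nat.abs_cast]
    calc (m.choose i : ℝ) * |u| ^ (m - i) * _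
        ≤ (m.choose i : ℝ) * M ^ (m - i) *
          (4 * (n.factorial * ((2 * Real.pi) ^ i * (1 / 6) ^ i * M ^ i)) / (2 * Real.pi) ^ (n + i + 1)) := by
          gcongr
          refine h1.trans ?_
          gcongr
          refine h2.trans ?_
          gcongr
      _ = _ := by
          rw [show M ^ m = M ^ (m - i) * M ^ i by rw [← pow_add]; congr 1; omega,
            show n + i + 1 = (n + 1) + i by ring, pow_add _ (n + 1) i]
          have : (2 * Real.pi) ^ i ≠ 0 := by positivity
          have : (2 * Real.pi) ^ (n + 1) ≠ 0 := by positivity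
          rw [one_pow]
          generalize (2 * Real.pi) ^ i = a at *
          generalize (2 * Real.pi) ^ (n + 1) = b at *
          field_simp
  rw [A1_s17]
  refine (Finset.abs_sum_le_sum_abs _ _).trans ((Finset.sum_le_sum hterm).trans ?_)
  rw [← Finset.mul_sum, ← add_pow]
  have h7 : (1 / 6 + 1 : ℝ) ^ m ≤ 3 := by
    calc (1 / 6 + 1 : ℝ) ^ m ≤ (1 / 6 + 1 : ℝ) ^ 6 := by
          apply pow_le_pow_right₀ (by norm_num) hm
      _ ≤ 3 := by norm_num
  calc _ ≤ (4 * n.factorial * M ^ m / (2 * Real.pi) ^ (n + 1)) * 3 := by gcongr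
    _ = _ := by ring

noncomputable def Kc (s m : ℕ) : ℝ :=
  ∑ i ∈ Finset.range (m + 1), (m.choose i : ℝ) * ((-1) ^ i / ((s : ℝ) + i))

noncomputable def kap (s p : ℕ) : ℝ := Kc s (2 * p) * s * (s + 2 * p).choose p / 4 ^ p

noncomputable def GG (s N m : ℕ) : ℝ :=
  ∑ k ∈ Finset.Icc (-(N : ℤ)) (N : ℤ), (k : ℝ) ^ m * gtilde s ((k : ℝ) / (2 * ((N : ℝ) + 1)))

lemma fact_pow (s : ℕ) (hs : 6 ≤ s) : (s.factorial : ℝ) * 2 ^ s ≤ (s : ℝ) ^ s := by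
  induction s, hs using Nat.le_induction with
  | base => norm_num [Nat.factorial]
  | succ s hs ih =>
    rw [Nat.factorial_succ]
    have hs0 : (0 : ℝ) < s := by positivity
    have hb : 2 * (s : ℝ) ^ s ≤ ((s : ℝ) + 1) ^ s := by
      have hi : 0 < 1 / (s : ℝ) := by positivity
      have := one_add_mul_le_pow (a := 1 / (s : ℝ)) (by linarith) s
      rw [mul_one_div_cancel hs0.ne'] at this
      calc 2 * (s : ℝ) ^ s ≤ (1 + 1 / (s : ℝ)) ^ s * s ^ s := by gcongr; linarith
        _ = _ := by rw [← mul_pow]; congr 1; field_simp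
    push_cast
    calc ((s : ℝ) + 1) * s.factorial * 2 ^ (s + 1) = ((s : ℝ) + 1) * (2 * (s.factorial * 2 ^ s)) := by ring
      _ ≤ ((s : ℝ) + 1) * (2 * s ^ s) := by gcongr
      _ ≤ ((s : ℝ) + 1) * ((s : ℝ) + 1) ^ s := by gcongr
      _ = _ := by ring

lemma G_raw (n N m : ℕ) (hs : Even (n + 1)) (hn : 7 ≤ n) :
    GG (n + 1) N m * (n.factorial * ((N : ℝ) + 1) ^ n)
      = ∑ j ∈ Finset.range (2 * (n + 1)), (-1 : ℝ) ^ j *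
        (A1_s17 m n (((N : ℝ) + 1) * kn (n + 1) j) ((N : ℝ) + 1)
          - A1_s17 m n (((N : ℝ) + 1) * kn (n + 1) j) (⌈((N : ℝ) + 1) * kn (n + 1) j⌉ : ℤ)) := by
  have hM : (0 : ℝ) < (N : ℝ) + 1 := by positivity
  have hf : (n.factorial : ℝ) ≠ 0 := by positivity
  have h1 : ∀ k ∈ Finset.Icc (-(N : ℤ)) (N : ℤ),
      (k : ℝ) ^ m * gtilde (n + 1) ((k : ℝ) / (2 * ((N : ℝ) + 1))) * (n.factorial * ((N : ℝ) + 1) ^ n)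
      = ∑ j ∈ Finset.range (2 * (n + 1)), (-1 : ℝ) ^ j *
          ((k : ℝ) ^ m * tp n ((k : ℝ) - ((N : ℝ) + 1) * kn (n + 1) j)) := by
    intro k hk
    rw [Finset.mem_Icc] at hk
    have hk1 : -(N : ℝ) ≤ k := by exact_mod_cast hk.1
    have hk2 : (k : ℝ) ≤ N := by exact_mod_cast hk.2
    have hx : (k : ℝ) / ((N : ℝ) + 1) ∈ Set.Icc (-1 : ℝ) 1 := by
      constructor
      · rw [le_div_iff₀ hM]; linarith
      · rw [div_le_iff₀ hM]; linarith
    obtain ⟨n', rfl⟩ : ∃ n', n = n' + 1 := ⟨n - 1, by omega⟩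
    rw [gtilde, show 2 * ((k : ℝ) / (2 * ((N : ℝ) + 1))) = (k : ℝ) / ((N : ℝ) + 1) by field_simp,
      Nat.add_sub_cancel, f_repr _ hs (by omega) _ _ hx, Finset.mul_sum, Finset.sum_mul]
    apply Finset.sum_congr rfl
    intro j _
    have htp : tp (n' + 1) ((k : ℝ) - ((N : ℝ) + 1) * kn (n' + 1 + 1) j)
        = ((N : ℝ) + 1) ^ (n' + 1) * tp (n' + 1) ((k : ℝ) / ((N : ℝ) + 1) - kn (n' + 1 + 1) j) := by
      have he : (k : ℝ) - ((N : ℝ) + 1) * kn (n' + 1 + 1) j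
          = ((N : ℝ) + 1) * ((k : ℝ) / ((N : ℝ) + 1) - kn (n' + 1 + 1) j) := by field_simp
      rw [he]
      generalize (k : ℝ) / ((N : ℝ) + 1) - kn (n' + 1 + 1) j = y
      simp only [tp, mul_pos_iff_of_pos_left hM]
      split_ifs
      · rw [mul_pow]
      · simp
    rw [htp]
    field_simp
  rw [GG, Finset.sum_mul, Finset.sum_congr rfl h1, Finset.sum_comm]
  apply Finset.sum_congr rfl
  intro j _
  rw [← Finset.mul_sum, tp_sum m n N (by omega)]
  rw [abs_mul, abs_of_pos hM]
  have := Real.abs_cos_le_one (j * Real.pi / (n + 1 : ℕ))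
  rw [kn]
  nlinarith

lemma G_main (n N p : ℕ) (hs : Even (n + 1)) (hn : 7 ≤ n) (hp : p ≤ 3) (hN : 2 * (n + 1) ≤ N) :
    ∃ e : ℝ, |e| ≤ 6 / 12 ^ (n + 1) ∧
      GG (n + 1) N (2 * p) * (n.factorial * ((N : ℝ) + 1) ^ n)
        = (((N : ℝ) + 1) ^ (n + 1) * 4 * (1 / 2) ^ (n + 1)) * ((N : ℝ) + 1) ^ (2 * p) *
          (kap (n + 1) p + e) := by
  have hraw := G_raw n N (2 * p) hs hn
  have hNR : 2 * ((n : ℝ) + 1) ≤ N := by exact_mod_cast hN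
  set M : ℝ := (N : ℝ) + 1 with hMdef
  have hM : 0 < M := by positivity
  have hπ := Real.pi_gt_three
  set E := ∑ j ∈ Finset.range (2 * (n + 1)), (-1 : ℝ) ^ j *
    A1_s17 (2 * p) n (M * kn (n + 1) j) (⌈M * kn (n + 1) j⌉ : ℤ) with hE
  have hEb : |E| ≤ 2 * ((n : ℝ) + 1) * (12 * n.factorial * M ^ (2 * p) / (2 * Real.pi) ^ (n + 1)) := by
    refine (Finset.abs_sum_le_sum_abs _ _).trans ?_
    have : ∀ j ∈ Finset.range (2 * (n + 1)), |(-1 : ℝ) ^ j *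
        A1_s17 (2 * p) n (M * kn (n + 1) j) (⌈M * kn (n + 1) j⌉ : ℤ)|
        ≤ 12 * n.factorial * M ^ (2 * p) / (2 * Real.pi) ^ (n + 1) := by
      intro j _
      rw [abs_mul, abs_pow, abs_neg, abs_one, one_pow, one_mul]
      apply A1_bound _ _ (by omega) hn _ _ (by linarith)
      rw [abs_mul, abs_of_pos hM]
      have := Real.abs_cos_le_one (j * Real.pi / (n + 1 : ℕ))
      rw [kn]
      nlinarith
    refine (Finset.sum_le_card_nsmul _ _ _ this).trans (le_of_eq ?_)
    rw [Finset.card_range, nsmul_eq_mul]; push_cast; ring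
  have hA2 : ∑ j ∈ Finset.range (2 * (n + 1)), (-1 : ℝ) ^ j * A2_s17 (2 * p) n (M * kn (n + 1) j) M = 0 := by
    simp only [A2_s17, Finset.mul_sum]
    rw [Finset.sum_comm]
    apply Finset.sum_eq_zero
    intro l _
    have := L_small (n + 1) (by omega) (n - l) (by omega)
    rw [← mul_zero ((n.choose l : ℝ) * (-M) ^ (n - l) *
      (bernoulliFun (2 * p + l + 1) M / ((2 * p + l + 1 : ℕ) : ℝ))), ← this, Finset.mul_sum]
    apply Finset.sum_congr rfl
    intro j _
    rw [← neg_mul, mul_pow]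
    ring
  have hC : ∀ u : ℝ, ∑ i ∈ Finset.range (2 * p + 1), ((2 * p).choose i : ℝ) * u ^ (2 * p - i) *
      ((-u) ^ (n + i + 1) / ((n + i + 1 : ℕ) : ℝ)) = u ^ (n + 1 + 2 * p) * Kc (n + 1) (2 * p) := by
    intro u
    rw [Kc, Finset.mul_sum]
    apply Finset.sum_congr rfl
    intro i hi
    rw [Finset.mem_range] at hi
    rw [show n + i + 1 = (n + 1) + i by ring, pow_add (-u), hs.neg_pow, neg_pow u i,
      show u ^ (n + 1 + 2 * p) = u ^ (2 * p - i) * u ^ (n + 1) * u ^ i by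
        rw [← pow_add, ← pow_add]; congr 1; omega]
    push_cast
    ring
  have hmain : GG (n + 1) N (2 * p) * (n.factorial * M ^ n)
      = M ^ (n + 1 + 2 * p) * Kc (n + 1) (2 * p) *
        ((1 / 2) ^ (n + 1 + 2 * p) * (4 * (n + 1 : ℕ) * (n + 1 + 2 * p).choose p)) - E := by
    rw [hraw]
    simp only [mul_sub, Finset.sum_sub_distrib]
    rw [← hE]
    congr 1
    rw [← L_big (n + 1) (by omega) p (by omega), ← sub_zero (∑ j ∈ Finset.range (2 * (n + 1)),
      (-1 : ℝ) ^ j * A1_s17 (2 * p) n (M * kn (n + 1) j) M), ← hA2, ← Finset.sum_sub_distrib, Finset.mul_sum]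
    apply Finset.sum_congr rfl
    intro j _
    rw [← mul_sub, A_const, hC, mul_pow]
    ring
  set W := (M ^ (n + 1) * 4 * (1 / 2) ^ (n + 1)) * M ^ (2 * p) with hW
  have hW0 : 0 < W := by positivity
  refine ⟨-E / W, ?_, ?_⟩
  · rw [abs_div, abs_neg, abs_of_pos hW0, div_le_iff₀ hW0]
    refine hEb.trans ?_
    have hfp := fact_pow (n + 1) (by omega)
    rw [Nat.factorial_succ] at hfp
    push_cast at hfp
    have h12 : (12 * ((n : ℝ) + 1)) ^ (n + 1) ≤ (2 * Real.pi) ^ (n + 1) * M ^ (n + 1) := by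
      rw [← mul_pow]
      apply pow_le_pow_left₀ (by positivity)
      nlinarith
    have h2 : 2 * ((n : ℝ) + 1) * (12 * n.factorial * M ^ (2 * p))  * 12 ^ (n + 1)
        ≤ 24 * (1 / 2) ^ (n + 1) * ((2 * Real.pi) ^ (n + 1) * M ^ (n + 1)) * M ^ (2 * p) := by
      calc 2 * ((n : ℝ) + 1) * (12 * n.factorial * M ^ (2 * p)) * 12 ^ (n + 1)
          = 24 * (1 / 2) ^ (n + 1) * (((n : ℝ) + 1) * n.factorial * 2 ^ (n + 1)) * 12 ^ (n + 1) * M ^ (2 * p) := by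
            have : (1 / 2 : ℝ) ^ (n + 1) * 2 ^ (n + 1) = 1 := by rw [← mul_pow]; norm_num
            linear_combination (-24 * ((n : ℝ) + 1) * n.factorial * 12 ^ (n + 1) * M ^ (2 * p)) * this
        _ ≤ 24 * (1 / 2) ^ (n + 1) * (((n : ℝ) + 1) ^ (n + 1)) * 12 ^ (n + 1) * M ^ (2 * p) := by gcongr
        _ = 24 * (1 / 2) ^ (n + 1) * (12 * ((n : ℝ) + 1)) ^ (n + 1) * M ^ (2 * p) := by rw [mul_pow 12]; ring
        _ ≤ _ := by gcongr
    rw [← mul_div_assoc, div_mul_eq_mul_div, div_le_div_iff₀ (by positivity) (by positivity)]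
    refine h2.trans (le_of_eq ?_)
    rw [hW]; ring
  · rw [hmain, mul_add, mul_div_cancel₀ _ hW0.ne', hW, kap, pow_add, pow_add (1 / 2 : ℝ), pow_mul (1 / 2 : ℝ)]
    rw [show ((1 / 2 : ℝ) ^ 2) ^ p = 1 / 4 ^ p by rw [← one_div_pow]; norm_num]
    ring

lemma kap0 (s : ℕ) (hs : 0 < s) : kap s 0 = 1 := by
  have : (s : ℝ) ≠ 0 := by positivity
  simp [kap, Kc, this]

lemma kap1 (s : ℕ) (hs : 0 < s) : kap s 1 = 1 / (2 * ((s : ℝ) + 1)) := by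
  have : (s : ℝ) ≠ 0 := by positivity
  have : (s : ℝ) + 1 ≠ 0 := by positivity
  have : (s : ℝ) + 2 ≠ 0 := by positivity
  simp only [kap, Kc, mul_one, Finset.sum_range_succ, Finset.sum_range_zero, Nat.choose_one_right]
  norm_num [Nat.choose]
  field_simp
  ring

lemma kap2 (s : ℕ) (hs : 0 < s) : kap s 2 = 3 / (4 * ((s : ℝ) + 2) * ((s : ℝ) + 1)) := by
  have : (s : ℝ) ≠ 0 := by positivity
  have : (s : ℝ) + 1 ≠ 0 := by positivity
  have : (s : ℝ) + 2 ≠ 0 := by positivity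
  have : (s : ℝ) + 3 ≠ 0 := by positivity
  have : (s : ℝ) + 4 ≠ 0 := by positivity
  simp only [kap, Kc, Finset.sum_range_succ, Finset.sum_range_zero, Nat.cast_choose_two]
  norm_num [Nat.choose]
  field_simp
  ring

lemma kap3 : kap 8 3 = (15 / 8) * ((Nat.factorial 8 : ℝ) / (Nat.factorial 11)) := by
  simp only [kap, Kc, Finset.sum_range_succ, Finset.sum_range_zero]
  norm_num [Nat.choose, Nat.factorial]

lemma eps_bound (s : ℕ) (hs : 8 ≤ s) :
    6 / 12 ^ s * (((s : ℝ) + 1) * ((s : ℝ) + 2)) ≤ 1 / 100000 := by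
  induction s, hs using Nat.le_induction with
  | base => norm_num
  | succ s hs ih =>
    refine le_trans ?_ ih
    have : (0 : ℝ) < 12 ^ s := by positivity
    have hs' : (8 : ℝ) ≤ s := by exact_mod_cast hs
    rw [div_mul_eq_mul_div, div_mul_eq_mul_div, div_le_div_iff₀ (by positivity) (by positivity), pow_succ]
    push_cast
    have h : 6 * (((s : ℝ) + 1 + 1) * ((s : ℝ) + 1 + 2)) ≤ 6 * (((s : ℝ) + 1) * ((s : ℝ) + 2)) * 12 := by
      nlinarith
    nlinarith

lemma cos_series_d2 (S : Finset ℤ) (a : ℤ → ℝ) :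
    deriv (deriv (fun t : ℝ => ∑ k ∈ S, a k * Real.cos (k * t)))
      = fun t : ℝ => ∑ k ∈ S, (-((k : ℝ) ^ 2) * a k) * Real.cos (k * t) := by
  have h1 : deriv (fun t : ℝ => ∑ k ∈ S, a k * Real.cos (k * t))
      = fun t : ℝ => ∑ k ∈ S, a k * (-Real.sin (k * t) * k) := by
    ext t
    apply HasDerivAt.deriv
    apply HasDerivAt.fun_sum
    intro k _
    apply HasDerivAt.const_mul
    apply HasDerivAt.cos
    simpa using (hasDerivAt_id t).const_mul (k : ℝ)
  rw [h1]
  ext t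
  have h2 : ∑ k ∈ S, (-((k : ℝ) ^ 2) * a k) * Real.cos (k * t)
      = ∑ k ∈ S, a k * (-(Real.cos (k * t) * k) * k) := by
    apply Finset.sum_congr rfl
    intro k _; ring
  rw [h2]
  apply HasDerivAt.deriv
  apply HasDerivAt.fun_sum
  intro k _
  apply HasDerivAt.const_mul
  apply HasDerivAt.mul_const
  apply HasDerivAt.fun_neg
  apply HasDerivAt.sin
  simpa using (hasDerivAt_id t).const_mul (k : ℝ)

lemma sigma_eq (s N : ℕ) : sigmaT s N = fun t : ℝ => ∑ k ∈ Finset.Icc (-(N : ℤ)) (N : ℤ),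
    ((gnorm s N)⁻¹ * gtilde s ((k : ℝ) / (2 * ((N : ℝ) + 1)))) * Real.cos (k * t) := by
  ext t
  rw [sigmaT, one_div, ← Complex.ofReal_inv, Complex.re_ofReal_mul, Complex.re_sum, Finset.mul_sum]
  apply Finset.sum_congr rfl
  intro k _
  rw [Complex.re_ofReal_mul, show (k : ℂ) * t * Complex.I = ((k * t : ℝ) : ℂ) * Complex.I by push_cast; ring,
    Complex.exp_ofReal_mul_I_re]
  ring

lemma d2 (s N : ℕ) : |iteratedDeriv 2 (sigmaT s N) 0| = |GG s N 2 / GG s N 0| := by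
  rw [iteratedDeriv_eq_iterate, sigma_eq]
  simp only [Function.iterate_succ, Function.iterate_zero, Function.comp, id, cos_series_d2]
  rw [← abs_neg]
  congr 1
  simp only [GG, gnorm, pow_zero, one_mul, mul_zero, Real.cos_zero, mul_one, div_eq_inv_mul,
    Finset.mul_sum, ← Finset.sum_neg_distrib]
  apply Finset.sum_congr rfl
  intro k _; ring

lemma d4 (s N : ℕ) : |iteratedDeriv 4 (sigmaT s N) 0| = |GG s N 4 / GG s N 0| := by
  rw [iteratedDeriv_eq_iterate, sigma_eq]
  simp only [Function.iterate_succ, Function.iterate_zero, Function.comp, id, cos_series_d2]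
  congr 1
  simp only [GG, gnorm, pow_zero, one_mul, mul_zero, Real.cos_zero, mul_one, div_eq_inv_mul,
    Finset.mul_sum]
  apply Finset.sum_congr rfl
  intro k _; ring

lemma d6 (s N : ℕ) : |iteratedDeriv 6 (sigmaT s N) 0| = |GG s N 6 / GG s N 0| := by
  rw [iteratedDeriv_eq_iterate, sigma_eq]
  simp only [Function.iterate_succ, Function.iterate_zero, Function.comp, id, cos_series_d2]
  rw [← abs_neg]
  congr 1
  simp only [GG, gnorm, pow_zero, one_mul, mul_zero, Real.cos_zero, mul_one, div_eq_inv_mul,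
    Finset.mul_sum, ← Finset.sum_neg_distrib]
  apply Finset.sum_congr rfl
  intro k _; ring

lemma ratio_bound (s N p : ℕ) (hs_even : Even s) (hs : 8 ≤ s) (hN : 2 * s ≤ N) (hp : p ≤ 3)
    (hk : 1 / 10 ≤ kap s p * (((s : ℝ) + 1) * ((s : ℝ) + 2))) :
    0.999 * kap s p * ((N : ℝ) + 1) ^ (2 * p) ≤ |GG s N (2 * p) / GG s N 0| ∧
    |GG s N (2 * p) / GG s N 0| ≤ 1.001 * kap s p * ((N : ℝ) + 1) ^ (2 * p) := by
  obtain ⟨n, rfl⟩ : ∃ n, s = n + 1 := ⟨s - 1, by omega⟩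
  obtain ⟨e, he, hG⟩ := G_main n N p hs_even (by omega) hp hN
  obtain ⟨e0, he0, hG0⟩ := G_main n N 0 hs_even (by omega) (by omega) hN
  have hε := eps_bound (n + 1) hs
  rw [kap0 _ (by omega)] at hG0
  simp only [mul_zero, pow_zero, mul_one] at hG0
  set B : ℝ := (((n + 1 : ℕ) : ℝ) + 1) * (((n + 1 : ℕ) : ℝ) + 2) with hB
  have hB1 : 1 ≤ B := by
    rw [hB]; push_cast
    have : (0 : ℝ) ≤ n := by positivity
    nlinarith
  set ε : ℝ := 6 / 12 ^ (n + 1) with hεd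
  have hε0 : 0 < ε := by positivity
  have hε1 : ε ≤ 1 / 100000 := by nlinarith
  have hεk : ε ≤ kap (n + 1) p / 10000 := by
    have : ε * B ≤ kap (n + 1) p / 10000 * B := by linarith
    exact le_of_mul_le_mul_right this (by linarith)
  generalize kap (n + 1) p = κ at *
  rw [abs_le] at he he0
  set V : ℝ := (n.factorial * ((N : ℝ) + 1) ^ n) with hV
  set W : ℝ := (((N : ℝ) + 1) ^ (n + 1) * 4 * (1 / 2) ^ (n + 1)) with hW
  have hV0 : 0 < V := by positivity
  have hW0 : 0 < W := by positivity
  have hd : 0 < 1 + e0 := by linarith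
  have hP : 0 < ((N : ℝ) + 1) ^ (2 * p) := by positivity
  have hr : GG (n + 1) N (2 * p) / GG (n + 1) N 0
      = ((N : ℝ) + 1) ^ (2 * p) * ((κ + e) / (1 + e0)) := by
    rw [← mul_div_mul_right _ _ hV0.ne', hG, hG0]
    field_simp
  have hq : 0.999 * κ ≤ (κ + e) / (1 + e0) := by
    rw [le_div_iff₀ hd]; nlinarith
  have hq2 : (κ + e) / (1 + e0) ≤ 1.001 * κ := by
    rw [div_le_iff₀ hd]; nlinarith
  have hκ : 0 < κ := by linarith
  rw [hr, abs_of_nonneg (mul_nonneg hP.le (by linarith))]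
  constructor <;> nlinarith

theorem derivative_bounds_of_kernel_at_zero
    (s N : ℕ) (hs_even : Even s) (hs : 8 ≤ s) (hN : 2 * s ≤ N) :
    ((0.999 / (2 * ((s : ℝ) + 1))) * ((N : ℝ) + 1) ^ 2 ≤ |iteratedDeriv 2 (sigmaT s N) 0| ∧
      |iteratedDeriv 2 (sigmaT s N) 0| ≤ (1.001 / (2 * ((s : ℝ) + 1))) * ((N : ℝ) + 1) ^ 2) ∧
    ((3 * 0.999 / (4 * ((s : ℝ) + 2) * ((s : ℝ) + 1))) * ((N : ℝ) + 1) ^ 4 ≤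
        |iteratedDeriv 4 (sigmaT s N) 0| ∧
      |iteratedDeriv 4 (sigmaT s N) 0| ≤
        (3 * 1.001 / (4 * ((s : ℝ) + 2) * ((s : ℝ) + 1))) * ((N : ℝ) + 1) ^ 4) ∧
    (s = 8 → 20 ≤ N →
      |iteratedDeriv 6 (sigmaT 8 N) 0| ≤
        1.011 * (15 / 8) * ((Nat.factorial 8 : ℝ) / (Nat.factorial 11)) * ((N : ℝ) + 1) ^ 6) := by
  have hs0 : 0 < s := by omega
  have hsR : (8 : ℝ) ≤ s := by exact_mod_cast hs
  have r1 := ratio_bound s N 1 hs_even hs hN (by omega) (by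
    rw [kap1 s hs0, div_mul_eq_mul_div, le_div_iff₀ (by positivity)]; nlinarith)
  have r2 := ratio_bound s N 2 hs_even hs hN (by omega) (by
    rw [kap2 s hs0, div_mul_eq_mul_div, le_div_iff₀ (by positivity)]; nlinarith)
  rw [kap1 s hs0] at r1
  rw [kap2 s hs0] at r2
  refine ⟨?_, ?_, ?_⟩
  · rw [d2]
    convert r1 using 2 <;> ring
  · rw [d4]
    convert r2 using 2 <;> ring
  · intro h8 _
    subst h8
    have r3 := (ratio_bound 8 N 3 hs_even hs hN (by omega) (by
      rw [kap3]; norm_num [Nat.factorial])).2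
    rw [kap3] at r3
    rw [d6]
    refine r3.trans ?_
    have h : (0 : ℝ) ≤ (15 / 8) * ((Nat.factorial 8 : ℝ) / (Nat.factorial 11)) * ((N : ℝ) + 1) ^ 6 := by
      positivity
    have e1 : ((N : ℝ) + 1) ^ (2 * 3) = ((N : ℝ) + 1) ^ 6 := by norm_num
    rw [e1]
    nlinarith
end

section
/- Let k ≥ 1 be an integer and let ω be a real number with 0 < ω and kω < π/2. Then: (i) k·cos(ω) − cos(kω)·sin(ω)/sin(kω) ≤ k − 1/k; (ii) 0 ≤ (1+cos ω)·sin(kω)/(2k·sin ω) − cos(kω); and (iii) (1+cos ω)·sin(kω)/(2k·sin ω) − cos(kω) ≤ 1 − cos(kω) ≤ k²ω²/2. -/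
open scoped Real

lemma aux_nonneg (f f' : ℝ → ℝ) (w : ℝ) (hw : 0 < w) (h0 : f 0 = 0)
    (hd : ∀ x, HasDerivAt f (f' x) x) (hp : ∀ x, 0 < x → x < w → 0 ≤ f' x) : 0 ≤ f w := by
  have hm : MonotoneOn f (Set.Icc 0 w) := by
    apply monotoneOn_of_deriv_nonneg (convex_Icc 0 w)
    · exact fun x _ => (hd x).continuousAt.continuousWithinAt
    · exact fun x _ => (hd x).differentiableAt.differentiableWithinAt
    · intro x hx
      rw [interior_Icc] at hx
      rw [(hd x).deriv]
      exact hp x hx.1 hx.2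
  have := hm (Set.left_mem_Icc.2 hw.le) (Set.right_mem_Icc.2 hw.le) hw.le
  rwa [h0] at this

theorem elementary_trigonometric_inequalities
    (k : ℕ) (hk : 1 ≤ k) (ω : ℝ) (hω : 0 < ω) (hkω : (k : ℝ) * ω < π / 2) :
    ((k : ℝ) * Real.cos ω - Real.cos ((k : ℝ) * ω) * Real.sin ω / Real.sin ((k : ℝ) * ω) ≤
        (k : ℝ) - 1 / (k : ℝ)) ∧
    (0 ≤ (1 + Real.cos ω) * Real.sin ((k : ℝ) * ω) / (2 * (k : ℝ) * Real.sin ω) -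
        Real.cos ((k : ℝ) * ω)) ∧
    ((1 + Real.cos ω) * Real.sin ((k : ℝ) * ω) / (2 * (k : ℝ) * Real.sin ω) -
        Real.cos ((k : ℝ) * ω) ≤ 1 - Real.cos ((k : ℝ) * ω)) ∧
    (1 - Real.cos ((k : ℝ) * ω) ≤ (k : ℝ) ^ 2 * ω ^ 2 / 2) := by
  have hK : (1 : ℝ) ≤ k := by exact_mod_cast hk
  generalize (k : ℝ) = K at *
  have hK0 : 0 < K := by linarith
  have hpi := Real.pi_pos
  have pos : ∀ x, 0 < x → x ≤ ω → 0 < Real.sin x ∧ 0 < Real.sin (K * x) ∧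
      0 < Real.cos (K * x) ∧ Real.cos (K * x) ≤ Real.cos x := by
    intro x hx hxw
    have h1 : K * x ≤ K * ω := by gcongr
    have h2 : x ≤ K * x := by nlinarith
    have h3 : 0 < K * x := by positivity
    refine ⟨Real.sin_pos_of_pos_of_lt_pi hx (by linarith),
      Real.sin_pos_of_pos_of_lt_pi h3 (by linarith),
      Real.cos_pos_of_mem_Ioo ⟨by linarith, by linarith⟩,
      Real.cos_le_cos_of_nonneg_of_le_pi hx.le (by linarith) h2⟩
  have hs : ∀ x, HasDerivAt (fun x => Real.sin (K * x)) (Real.cos (K * x) * K) x := fun x => by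
    simpa using ((hasDerivAt_id x).const_mul K).sin
  have hc : ∀ x, HasDerivAt (fun x => Real.cos (K * x)) (-Real.sin (K * x) * K) x := fun x => by
    simpa using ((hasDerivAt_id x).const_mul K).cos
  obtain ⟨p1, p2, p3, p4⟩ := pos ω hω le_rfl
  have A := aux_nonneg
    (fun x => (K ^ 2 * (1 - Real.cos x)) * Real.sin (K * x)
      + K * (Real.cos (K * x) * Real.sin x) - Real.sin (K * x))
    (fun x => K * (K ^ 2 - 1) * (1 - Real.cos x) * Real.cos (K * x)) ω hω (by simp)
    (fun x => by
      refine ((((((Real.hasDerivAt_cos x).const_sub 1).const_mul (K ^ 2)).mul (hs x)).add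
        (((hc x).mul (Real.hasDerivAt_sin x)).const_mul K)).sub (hs x)).congr_deriv ?_
      ring)
    (fun x h1 h2 => by
      have := pos x h1 h2.le
      have h3 : 0 ≤ K ^ 2 - 1 := by nlinarith
      have h4 := sub_nonneg.2 (Real.cos_le_one x)
      have h5 := this.2.2.1
      positivity)
  have B := aux_nonneg
    (fun x => (1 + Real.cos x) * Real.sin (K * x) - 2 * K * (Real.sin x * Real.cos (K * x)))
    (fun x => (2 * K ^ 2 - 1) * (Real.sin x * Real.sin (K * x))
      + K * Real.cos (K * x) * (1 - Real.cos x)) ω hω (by simp)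
    (fun x => by
      refine ((((Real.hasDerivAt_cos x).const_add 1).mul (hs x)).sub
        (((Real.hasDerivAt_sin x).mul (hc x)).const_mul (2 * K))).congr_deriv ?_
      ring)
    (fun x h1 h2 => by
      obtain ⟨q1, q2, q3, q4⟩ := pos x h1 h2.le
      have h3 : 0 ≤ 2 * K ^ 2 - 1 := by nlinarith
      have h4 := sub_nonneg.2 (Real.cos_le_one x)
      positivity)
  have D := aux_nonneg
    (fun x => K * Real.sin x - Real.sin (K * x))
    (fun x => K * (Real.cos x - Real.cos (K * x))) ω hω (by simp)
    (fun x => by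
      refine (((Real.hasDerivAt_sin x).const_mul K).sub (hs x)).congr_deriv ?_
      ring)
    (fun x h1 h2 => by
      obtain ⟨q1, q2, q3, q4⟩ := pos x h1 h2.le
      exact mul_nonneg hK0.le (by linarith))
  refine ⟨?_, ?_, ?_, ?_⟩
  · have e : K - 1 / K - (K * Real.cos ω - Real.cos (K * ω) * Real.sin ω / Real.sin (K * ω))
      = ((K ^ 2 * (1 - Real.cos ω)) * Real.sin (K * ω)
      + K * (Real.cos (K * ω) * Real.sin ω) - Real.sin (K * ω)) / (K * Real.sin (K * ω)) := by
      field_simp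
      ring
    have := div_nonneg A (mul_pos hK0 p2).le
    linarith
  · rw [sub_nonneg, le_div_iff₀ (by positivity)]
    linarith
  · apply sub_le_sub_right
    rw [div_le_one (by positivity)]
    nlinarith [Real.cos_le_one ω]
  · have := Real.one_sub_sq_div_two_le_cos (x := K * ω)
    rw [mul_pow] at this
    linarith
end
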